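/- arXiv:1605.01400 — 5 statements merged into one kernel-verified Lean document; each statement's English description precedes it below -/
import Mathlib

section
/- Let I ⊂ ℝ^d be a bounded open set and l ∈ ℕ. Let F be a positive continuous symmetric function on the set D_l(I) of l-tuples of pairwise distinct points of I, and let μ be a Borel probability measure on (ℝ^d)^l, invariant under permutations of the coordinates and concentrated on D_l(I), such that for every T ∈ 𝔊₀(I) the equality d(μ∘T)/dμ(𝐩) = F(T̂𝐩)/F(𝐩) holds for μ-almost every 𝐩, where (μ∘T)(A) = μ(T̂(A)). Then the same equality holds for every T ∈ 𝔊(I), and there exists a constant c > 0 such that μ(A) = c ∫_{A ∩ D_l(I)} F(𝐩) d𝐩 for every Borel set A ⊆ (ℝ^d)^l, where d𝐩 denotes Lebesgue measure on (ℝ^d)^l. -/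
open MeasureTheory Metric

/-- The data of an elementary cube exchange inside `I ⊆ ℝ^d`: finitely many pairwise
disjoint closed balls (cubes, for the sup-norm) `B(a_i,r_i)`, `B(a'_i,r_i)` contained
in `I`. -/
structure CubeExchangeData (d : ℕ) (I : Set (Fin d → ℝ)) where
  k : ℕ
  a : Fin k → Fin d → ℝ
  a' : Fin k → Fin d → ℝ
  r : Fin k → ℝ
  r_pos : ∀ i, 0 < r i
  disjoint : Pairwise (Function.onFun Disjoint
    (Sum.elim (fun i : Fin k => closedBall (a i) (r i))
      (fun i : Fin k => closedBall (a' i) (r i))))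
  subset : ∀ i, closedBall (a i) (r i) ⊆ I ∧ closedBall (a' i) (r i) ⊆ I

/-- A map `T : ℝ^d → ℝ^d` realizes the elementary cube exchange with data `D` if it
translates `B(a_i,r_i)` onto `B(a'_i,r_i)` and back, and is the identity elsewhere. -/
def CubeExchangeData.Realizes {d : ℕ} {I : Set (Fin d → ℝ)} (D : CubeExchangeData d I)
    (T : (Fin d → ℝ) → (Fin d → ℝ)) : Prop :=
  (∀ i, ∀ x ∈ closedBall (D.a i) (D.r i), T x = x + (D.a' i - D.a i)) ∧
  (∀ i, ∀ x ∈ closedBall (D.a' i) (D.r i), T x = x + (D.a i - D.a' i)) ∧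
  (∀ x, (∀ i, x ∉ closedBall (D.a i) (D.r i) ∧ x ∉ closedBall (D.a' i) (D.r i)) → T x = x)

/-- Rationality of the data: all centres have rational coordinates and all radii are
rational. -/
def CubeExchangeData.IsRational {d : ℕ} {I : Set (Fin d → ℝ)}
    (D : CubeExchangeData d I) : Prop :=
  (∀ i j, ∃ q : ℚ, D.a i j = (q : ℝ)) ∧ (∀ i j, ∃ q : ℚ, D.a' i j = (q : ℝ)) ∧
    (∀ i, ∃ q : ℚ, D.r i = (q : ℝ))

/-- The group `𝔊(I)` generated by all elementary cube exchanges with balls in `I`. -/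
def cubeExchangeGroup (d : ℕ) (I : Set (Fin d → ℝ)) : Subgroup (Equiv.Perm (Fin d → ℝ)) :=
  Subgroup.closure {T : Equiv.Perm (Fin d → ℝ) | ∃ D : CubeExchangeData d I, D.Realizes ⇑T}

/-- The countable subgroup `𝔊₀(I)` generated by elementary cube exchanges with rational
centres and radii. -/
def rationalCubeExchangeGroup (d : ℕ) (I : Set (Fin d → ℝ)) :
    Subgroup (Equiv.Perm (Fin d → ℝ)) :=
  Subgroup.closure
    {T : Equiv.Perm (Fin d → ℝ) |
      ∃ D : CubeExchangeData d I, D.IsRational ∧ D.Realizes ⇑T}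

/-- The set of `l`-tuples of pairwise distinct points of `I`. -/
def distinctTuples (d l : ℕ) (I : Set (Fin d → ℝ)) : Set (Fin l → Fin d → ℝ) :=
  {p | Function.Injective p ∧ ∀ i, p i ∈ I}


namespace CubeEx

lemma realizes_involutive {d : ℕ} {I : Set (Fin d → ℝ)} (D : CubeExchangeData d I)
    {T : (Fin d → ℝ) → (Fin d → ℝ)} (h : D.Realizes T) (x : Fin d → ℝ) : T (T x) = x := by
  obtain ⟨h1, h2, h3⟩ := h
  by_cases hx : ∃ i, x ∈ closedBall (D.a i) (D.r i)
  · obtain ⟨i, hi⟩ := hx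
    rw [h1 i x hi, h2 i]
    · abel
    · rw [mem_closedBall, dist_eq_norm] at hi ⊢
      convert hi using 2; abel
  by_cases hx' : ∃ i, x ∈ closedBall (D.a' i) (D.r i)
  · obtain ⟨i, hi⟩ := hx'
    rw [h2 i x hi, h1 i]
    · abel
    · rw [mem_closedBall, dist_eq_norm] at hi ⊢
      convert hi using 2; abel
  push Not at hx hx'
  rw [h3 x (fun i => ⟨hx i, hx' i⟩), h3 x (fun i => ⟨hx i, hx' i⟩)]

lemma realizes_mem {d : ℕ} {I : Set (Fin d → ℝ)} (D : CubeExchangeData d I)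
    {T : (Fin d → ℝ) → (Fin d → ℝ)} (h : D.Realizes T) (x : Fin d → ℝ) (hxI : x ∈ I) :
    T x ∈ I := by
  obtain ⟨h1, h2, h3⟩ := h
  by_cases hx : ∃ i, x ∈ closedBall (D.a i) (D.r i)
  · obtain ⟨i, hi⟩ := hx
    rw [h1 i x hi]
    apply (D.subset i).2
    rw [mem_closedBall, dist_eq_norm] at hi ⊢
    convert hi using 2; abel
  by_cases hx' : ∃ i, x ∈ closedBall (D.a' i) (D.r i)
  · obtain ⟨i, hi⟩ := hx'
    rw [h2 i x hi]
    apply (D.subset i).1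
    rw [mem_closedBall, dist_eq_norm] at hi ⊢
    convert hi using 2; abel
  push Not at hx hx'
  rwa [h3 x (fun i => ⟨hx i, hx' i⟩)]

lemma exists_realizes {d : ℕ} {I : Set (Fin d → ℝ)} (D : CubeExchangeData d I) :
    ∃ T : Equiv.Perm (Fin d → ℝ), D.Realizes ⇑T := by
  classical
  let T : (Fin d → ℝ) → (Fin d → ℝ) := fun x =>
    if h : ∃ i, x ∈ closedBall (D.a i) (D.r i) then x + (D.a' h.choose - D.a h.choose)
    else if h : ∃ i, x ∈ closedBall (D.a' i) (D.r i) then x + (D.a h.choose - D.a' h.choose)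
    else x
  have huniq : ∀ x i j, x ∈ closedBall (D.a i) (D.r i) → x ∈ closedBall (D.a j) (D.r j) →
      i = j := by
    intro x i j hi hj
    by_contra hne
    have := D.disjoint (show (Sum.inl i : Fin D.k ⊕ Fin D.k) ≠ Sum.inl j by simpa using hne)
    exact Set.disjoint_left.1 this hi hj
  have huniq' : ∀ x i j, x ∈ closedBall (D.a' i) (D.r i) → x ∈ closedBall (D.a' j) (D.r j) →
      i = j := by
    intro x i j hi hj
    by_contra hne
    have := D.disjoint (show (Sum.inr i : Fin D.k ⊕ Fin D.k) ≠ Sum.inr j by simpa using hne)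
    exact Set.disjoint_left.1 this hi hj
  have hmix : ∀ x i j, x ∈ closedBall (D.a i) (D.r i) → x ∈ closedBall (D.a' j) (D.r j) →
      False := by
    intro x i j hi hj
    have := D.disjoint (show (Sum.inl i : Fin D.k ⊕ Fin D.k) ≠ Sum.inr j by simp)
    exact Set.disjoint_left.1 this hi hj
  have hT : D.Realizes T := by
    refine ⟨?_, ?_, ?_⟩
    · intro i x hi
      have h : ∃ i, x ∈ closedBall (D.a i) (D.r i) := ⟨i, hi⟩
      simp only [T, dif_pos h]
      rw [huniq x _ _ h.choose_spec hi]
    · intro i x hi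
      have h : ∃ i, x ∈ closedBall (D.a' i) (D.r i) := ⟨i, hi⟩
      have h' : ¬ ∃ i, x ∈ closedBall (D.a i) (D.r i) := fun ⟨j, hj⟩ => hmix x j i hj hi
      simp only [T, dif_pos h, dif_neg h']
      rw [huniq' x _ _ h.choose_spec hi]
    · intro x hx
      have h' : ¬ ∃ i, x ∈ closedBall (D.a i) (D.r i) := fun ⟨j, hj⟩ => (hx j).1 hj
      have h : ¬ ∃ i, x ∈ closedBall (D.a' i) (D.r i) := fun ⟨j, hj⟩ => (hx j).2 hj
      simp only [T, dif_neg h, dif_neg h']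
  exact ⟨Function.Involutive.toPerm T (realizes_involutive D hT), hT⟩

/-- a countable-piece translation bijection preserves volume -/
lemma piecewise_translation {d : ℕ} {ι : Type} [Countable ι]
    (T : (Fin d → ℝ) → (Fin d → ℝ)) (hT : ∀ x, T (T x) = x)
    (P : ι → Set (Fin d → ℝ)) (v : ι → Fin d → ℝ) (hP : ∀ i, MeasurableSet (P i))
    (hdisj : Pairwise (Function.onFun Disjoint P)) (hcov : ∀ x, ∃ i, x ∈ P i)
    (hTP : ∀ i, ∀ x ∈ P i, T x = x + v i) : MeasurePreserving T volume volume := by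
  have hpre : ∀ A : Set (Fin d → ℝ), T ⁻¹' A = ⋃ i, (fun x => x + v i) '' (A ∩ P i) := by
    intro A
    ext x
    simp only [Set.mem_preimage, Set.mem_iUnion, Set.mem_image, Set.mem_inter_iff]
    constructor
    · intro hx
      obtain ⟨i, hi⟩ := hcov (T x)
      exact ⟨i, T x, ⟨hx, hi⟩, by rw [← hTP i _ hi, hT]⟩
    · rintro ⟨i, y, ⟨hy, hi⟩, rfl⟩
      rw [← hTP i y hi, hT]; exact hy
  have hmeas : ∀ A, MeasurableSet A → ∀ i, MeasurableSet ((fun x => x + v i) '' (A ∩ P i)) := by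
    intro A hA i
    exact (MeasurableEquiv.addRight (v i)).measurableEmbedding.measurableSet_image.2
      (hA.inter (hP i))
  have hTm : Measurable T := by
    intro A hA
    rw [hpre]
    exact MeasurableSet.iUnion (hmeas A hA)
  refine ⟨hTm, ?_⟩
  ext A hA
  rw [Measure.map_apply hTm hA, hpre, measure_iUnion _ (hmeas A hA)]
  · have h1 : ∀ i, volume ((fun x => x + v i) '' (A ∩ P i)) = volume (A ∩ P i) := by
      intro i
      rw [Set.image_add_right]
      exact measure_preimage_add_right volume (-v i) (A ∩ P i)
    simp_rw [h1]
    rw [← measure_iUnion _ (fun i => hA.inter (hP i))]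
    · congr 1
      ext x; simp only [Set.mem_iUnion, Set.mem_inter_iff]
      exact ⟨fun ⟨i, h⟩ => h.1, fun h => ⟨_, h, (hcov x).choose_spec⟩⟩
    · intro i j hij
      exact (hdisj hij).mono Set.inter_subset_right Set.inter_subset_right
  · intro i j hij
    rw [Function.onFun, Set.disjoint_left]
    rintro x ⟨y, ⟨hy, hyi⟩, rfl⟩ ⟨z, ⟨hz, hzj⟩, hzy⟩
    simp only at hzy
    rw [← hTP i y hyi, ← hTP j z hzj] at hzy
    have : z = y := by rw [← hT z, hzy, hT]
    subst this
    exact Set.disjoint_left.1 (hdisj hij) hyi hzj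

lemma realizes_measurePreserving {d : ℕ} {I : Set (Fin d → ℝ)} (D : CubeExchangeData d I)
    {T : (Fin d → ℝ) → (Fin d → ℝ)} (h : D.Realizes T) : MeasurePreserving T volume volume := by
  let P0 : Fin D.k ⊕ Fin D.k → Set (Fin d → ℝ) :=
    (Sum.elim (fun i : Fin D.k => closedBall (D.a i) (D.r i))
      (fun i : Fin D.k => closedBall (D.a' i) (D.r i)))
  have hP0 : ∀ s, MeasurableSet (P0 s) := by
    rintro (s | s) <;> exact measurableSet_closedBall
  refine piecewise_translation (ι := Option (Fin D.k ⊕ Fin D.k)) T (realizes_involutive D h)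
    (fun o => o.elim (⋃ s, P0 s)ᶜ P0)
    (fun o => o.elim 0 (Sum.elim (fun i => D.a' i - D.a i) (fun i => D.a i - D.a' i)))
    ?_ ?_ ?_ ?_
  · rintro (_ | s)
    · exact (MeasurableSet.iUnion hP0).compl
    · exact hP0 s
  · rintro (_ | s) (_ | t) hst
    · exact absurd rfl hst
    · simp only [Function.onFun, Option.elim]
      exact (disjoint_compl_left (a := ⋃ s, P0 s)).mono_right (Set.subset_iUnion P0 t)
    · simp only [Function.onFun, Option.elim]
      exact ((disjoint_compl_left (a := ⋃ s, P0 s)).mono_right (Set.subset_iUnion P0 s)).symm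
    · exact D.disjoint (fun e => hst (by rw [e]))
  · intro x
    by_cases hx : x ∈ ⋃ s, P0 s
    · obtain ⟨s, hs⟩ := Set.mem_iUnion.1 hx
      exact ⟨some s, hs⟩
    · exact ⟨none, hx⟩
  · rintro (_ | s | s) x hx
    · simp only [Option.elim, Set.mem_compl_iff, Set.mem_iUnion, not_exists] at hx
      simp only [Option.elim, add_zero]
      exact h.2.2 x (fun i => ⟨hx (Sum.inl i), hx (Sum.inr i)⟩)
    · exact h.1 s x hx
    · exact h.2.1 s x hx

lemma group_props {d : ℕ} {I : Set (Fin d → ℝ)} (T : Equiv.Perm (Fin d → ℝ))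
    (hT : T ∈ cubeExchangeGroup d I) :
    MeasurePreserving ⇑T volume volume ∧ MeasurePreserving ⇑T⁻¹ volume volume ∧
      (∀ x ∈ I, T x ∈ I) ∧ (∀ x ∈ I, T⁻¹ x ∈ I) := by
  unfold cubeExchangeGroup at hT
  induction hT using Subgroup.closure_induction with
  | mem T h =>
    obtain ⟨D, hD⟩ := h
    have : T⁻¹ = T := by
      ext1 x
      rw [Equiv.Perm.inv_eq_iff_eq, realizes_involutive D hD]
    rw [this]
    have h1 := realizes_measurePreserving D hD
    have h2 := realizes_mem D hD
    exact ⟨h1, h1, h2, h2⟩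
  | one => 
    rw [inv_one]
    exact ⟨MeasurePreserving.id _, MeasurePreserving.id _, fun x h => h, fun x h => h⟩
  | mul S T _ _ hS hT =>
    obtain ⟨a, b, c, e⟩ := hS
    obtain ⟨a', b', c', e'⟩ := hT
    rw [mul_inv_rev]
    exact ⟨a.comp a', b'.comp b, fun x h => c _ (c' _ h), fun x h => e' _ (e _ h)⟩
  | inv T _ hT =>
    obtain ⟨a, b, c, e⟩ := hT
    rw [inv_inv]
    exact ⟨b, a, e, c⟩

lemma rational_le {d : ℕ} {I : Set (Fin d → ℝ)} :
    rationalCubeExchangeGroup d I ≤ cubeExchangeGroup d I :=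
  Subgroup.closure_mono (fun _ ⟨D, _, h⟩ => ⟨D, h⟩)

lemma map_withDensity {X : Type*} [MeasurableSpace X] (μ : Measure X) {S S' : X → X}
    (hS : Measurable S) (hS' : Measurable S') (h : ∀ x, S (S' x) = x) {f : X → ENNReal}
    (hf : Measurable f) :
    (μ.withDensity f).map S' = (μ.map S').withDensity (f ∘ S) := by
  ext A hA
  rw [Measure.map_apply hS' hA, withDensity_apply _ (hS' hA), withDensity_apply _ hA,
    Measure.restrict_map hS' hA, lintegral_map (hf.comp hS) hS']
  simp [h]

lemma invariant_of_qi {X : Type*} [MeasurableSpace X] (μ : Measure X) {S S' : X → X}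
    (hS : Measurable S) (hS' : Measurable S') (h : ∀ x, S (S' x) = x) {f : X → ENNReal}
    (hf : Measurable f) (hpos : ∀ᵐ x ∂μ, f (S x) ≠ 0 ∧ f (S x) ≠ ⊤)
    (hq : μ.map S' = μ.withDensity (fun x => f (S x) / f x)) :
    (μ.withDensity (fun x => (f x)⁻¹)).map S' = μ.withDensity (fun x => (f x)⁻¹) := by
  have hfS : Measurable (fun x => f (S x)) := hf.comp hS
  have hfi : Measurable (fun x => (f x)⁻¹) := hf.inv
  have hfd : Measurable (fun x => f (S x) / f x) := hfS.div hf
  rw [map_withDensity μ hS hS' h hfi, hq, ← withDensity_mul _ hfd (hfi.comp hS)]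
  refine withDensity_congr_ae ?_
  filter_upwards [hpos] with x hx
  simp only [Pi.mul_apply, Function.comp]
  rw [div_eq_mul_inv, mul_comm, ← mul_assoc, ENNReal.inv_mul_cancel hx.1 hx.2, one_mul]

lemma qi_of_invariant {X : Type*} [MeasurableSpace X] (μ ν : Measure X) {S S' : X → X}
    (hS : Measurable S) (hS' : Measurable S') (h : ∀ x, S (S' x) = x) {f : X → ENNReal}
    (hf : Measurable f) (hpos : ∀ᵐ x ∂ν, f x ≠ 0 ∧ f x ≠ ⊤)
    (hμ : μ = ν.withDensity f) (hq : ν.map S' = ν) :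
    μ.map S' = μ.withDensity (fun x => f (S x) / f x) := by
  have hfS : Measurable (fun x => f (S x)) := hf.comp hS
  have hfd : Measurable (fun x => f (S x) / f x) := hfS.div hf
  rw [hμ, map_withDensity ν hS hS' h hf, hq, ← withDensity_mul _ hf hfd]
  refine withDensity_congr_ae ?_
  filter_upwards [hpos] with x hx
  simp only [Pi.mul_apply, Function.comp]
  rw [ENNReal.mul_div_cancel hx.1 hx.2]

end CubeEx

namespace CubeEx
open Filter Topology

lemma isOpen_distinct {d l : ℕ} {I : Set (Fin d → ℝ)} (hI : IsOpen I) :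
    IsOpen (distinctTuples d l I) := by
  have : distinctTuples d l I = (⋂ i : Fin l, ⋂ j : Fin l, {p | p i = p j → i = j}) ∩
      ⋂ i : Fin l, {p | p i ∈ I} := by
    ext p
    simp only [distinctTuples, Function.Injective, Set.mem_ofPred_eq, Set.mem_inter_iff,
      Set.mem_iInter]
  rw [this]
  refine IsOpen.inter (isOpen_iInter_of_finite fun i => isOpen_iInter_of_finite fun j => ?_)
    (isOpen_iInter_of_finite fun i => hI.preimage (continuous_apply i))
  by_cases h : i = j
  · simp [h]
  · simp only [h, imp_false]
    exact (isClosed_eq (continuous_apply i) (continuous_apply j)).isOpen_compl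

def Good {d l : ℕ} (I : Set (Fin d → ℝ)) (p q : Fin l → Fin d → ℝ) (R : ℝ) : Prop :=
  Pairwise (Function.onFun Disjoint
    (Sum.elim (fun i : Fin l => closedBall (p i) R) (fun i : Fin l => closedBall (q i) R))) ∧
  ∀ i, closedBall (p i) R ⊆ I ∧ closedBall (q i) R ⊆ I

lemma Good.symm {d l : ℕ} {I : Set (Fin d → ℝ)} {p q : Fin l → Fin d → ℝ} {R : ℝ}
    (h : Good I p q R) : Good I q p R := by
  refine ⟨?_, fun i => ⟨(h.2 i).2, (h.2 i).1⟩⟩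
  intro s t hst
  have := h.1 (show s.swap ≠ t.swap from fun e => hst (Sum.swap_leftInverse.injective e))
  rcases s with s | s <;> rcases t with t | t <;> exact this

lemma Good.mono {d l : ℕ} {I : Set (Fin d → ℝ)} {p q p' q' : Fin l → Fin d → ℝ} {R R' : ℝ}
    (h : Good I p q R) (hp : ∀ i, closedBall (p' i) R' ⊆ closedBall (p i) R)
    (hq : ∀ i, closedBall (q' i) R' ⊆ closedBall (q i) R) : Good I p' q' R' := by
  refine ⟨?_, fun i => ⟨(hp i).trans (h.2 i).1, (hq i).trans (h.2 i).2⟩⟩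
  intro s t hst
  have := h.1 hst
  rcases s with s | s <;> rcases t with t | t
  · exact this.mono (hp s) (hp t)
  · exact this.mono (hp s) (hq t)
  · exact this.mono (hq s) (hp t)
  · exact this.mono (hq s) (hq t)

lemma good_eventually {d l : ℕ} {I : Set (Fin d → ℝ)} (hI : IsOpen I)
    {p q : Fin l → Fin d → ℝ} (hp : p ∈ distinctTuples d l I) (hq : q ∈ distinctTuples d l I)
    (hpq : ∀ i j, p i ≠ q j) : ∀ᶠ R in 𝓝[>] (0 : ℝ), Good I p q R := by
  have hsub : ∀ x ∈ I, ∀ᶠ R in 𝓝[>] (0 : ℝ), closedBall x R ⊆ I := by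
    intro x hx
    obtain ⟨ε, hε, h⟩ := Metric.isOpen_iff.1 hI x hx
    filter_upwards [Ioo_mem_nhdsGT hε] with R hR
    exact (closedBall_subset_ball hR.2).trans h
  have hdis : ∀ x y : Fin d → ℝ, x ≠ y →
      ∀ᶠ R in 𝓝[>] (0 : ℝ), Disjoint (closedBall x R) (closedBall y R) := by
    intro x y hxy
    have : 0 < dist x y / 2 := half_pos (dist_pos.2 hxy)
    filter_upwards [Ioo_mem_nhdsGT this] with R hR
    apply closedBall_disjoint_closedBall
    linarith [hR.2]
  have h1 : ∀ᶠ R in 𝓝[>] (0 : ℝ), ∀ s t : Fin l ⊕ Fin l, s ≠ t →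
      Disjoint (closedBall (Sum.elim p q s) R) (closedBall (Sum.elim p q t) R) := by
    rw [eventually_all]; intro s
    rw [eventually_all]; intro t
    by_cases hst : s = t
    · simp [hst]
    · refine (hdis _ _ ?_).mono fun R h _ => h
      rcases s with s | s <;> rcases t with t | t
      · exact fun e => hst (by rw [hp.1 e])
      · exact hpq s t
      · exact (hpq t s).symm
      · exact fun e => hst (by rw [hq.1 e])
  have h2 : ∀ᶠ R in 𝓝[>] (0 : ℝ), ∀ i, closedBall (p i) R ⊆ I ∧ closedBall (q i) R ⊆ I := by
    rw [eventually_all]; intro i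
    exact (hsub _ (hp.2 i)).and (hsub _ (hq.2 i))
  filter_upwards [h1, h2] with R h1 h2
  refine ⟨?_, h2⟩
  intro s t hst
  have := h1 s t hst
  rcases s with s | s <;> rcases t with t | t <;> exact this

lemma rational_exchange {d l : ℕ} {I : Set (Fin d → ℝ)}
    (ν : Measure (Fin l → Fin d → ℝ))
    (hν : ∀ T ∈ rationalCubeExchangeGroup d I, ν.map (fun p => ⇑T⁻¹ ∘ p) = ν)
    (p q : Fin l → Fin d → ℚ) (r : ℚ) (hr : 0 < r)
    (hg : Good I (fun i j => (p i j : ℝ)) (fun i j => (q i j : ℝ)) r) :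
    ν (closedBall (fun i j => (p i j : ℝ)) r) = ν (closedBall (fun i j => (q i j : ℝ)) r) := by
  have hr' : (0 : ℝ) < r := by exact_mod_cast hr
  let D : CubeExchangeData d I :=
    { k := l, a := fun i j => (p i j : ℝ), a' := fun i j => (q i j : ℝ), r := fun _ => r
      r_pos := fun _ => hr', disjoint := hg.1, subset := hg.2 }
  have hD : D.IsRational := ⟨fun i j => ⟨p i j, rfl⟩, fun i j => ⟨q i j, rfl⟩, fun i => ⟨r, rfl⟩⟩
  obtain ⟨T, hT⟩ := exists_realizes D
  have hTm : T ∈ rationalCubeExchangeGroup d I := Subgroup.subset_closure ⟨D, hD, hT⟩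
  have hinv : T⁻¹ = T := by
    ext1 x
    rw [Equiv.Perm.inv_eq_iff_eq, realizes_involutive D hT]
  have hmp := (group_props T (rational_le hTm)).1
  have hmeas : Measurable (fun p : Fin l → Fin d → ℝ => ⇑T⁻¹ ∘ p) := by
    rw [hinv]
    exact measurable_pi_lambda _ fun i => hmp.measurable.comp (measurable_pi_apply i)
  conv_lhs => rw [← hν T hTm]
  rw [Measure.map_apply hmeas measurableSet_closedBall, hinv]
  congr 1
  have hmaps : ∀ i x, x ∈ closedBall (D.a' i) r → T x ∈ closedBall (D.a i) r := by
    intro i x hi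
    rw [hT.2.1 i x hi]
    rw [mem_closedBall, dist_eq_norm] at hi ⊢
    convert hi using 2; abel
  have hmaps' : ∀ i x, x ∈ closedBall (D.a i) r → T x ∈ closedBall (D.a' i) r := by
    intro i x hi
    rw [hT.1 i x hi]
    rw [mem_closedBall, dist_eq_norm] at hi ⊢
    convert hi using 2; abel
  rw [closedBall_pi _ hr'.le, closedBall_pi _ hr'.le]
  ext x
  simp only [Set.mem_preimage, Set.mem_pi, Set.mem_univ, true_imp_iff,
    Function.comp]
  constructor
  · intro h i
    have := hmaps' i _ (h i)
    rwa [realizes_involutive D hT] at this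
  · intro h i
    exact hmaps i _ (h i)

lemma exists_rat_near {d l : ℕ} (p : Fin l → Fin d → ℝ) {ε : ℝ} (hε : 0 < ε) :
    ∃ p' : Fin l → Fin d → ℚ, dist (fun i j => (p' i j : ℝ)) p ≤ ε := by
  have : ∀ i j, ∃ q : ℚ, dist (q : ℝ) (p i j) ≤ ε := by
    intro i j
    obtain ⟨q, h1, h2⟩ := exists_rat_btwn (show p i j < p i j + ε by linarith)
    refine ⟨q, ?_⟩
    rw [Real.dist_eq, abs_le]; constructor <;> linarith
  choose q hq using this
  exact ⟨q, (dist_pi_le_iff hε.le).2 fun i => (dist_pi_le_iff hε.le).2 fun j => hq i j⟩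

lemma exchange_le {d l : ℕ} {I : Set (Fin d → ℝ)}
    (ν : Measure (Fin l → Fin d → ℝ))
    (hν : ∀ T ∈ rationalCubeExchangeGroup d I, ν.map (fun p => ⇑T⁻¹ ∘ p) = ν)
    (p q : Fin l → Fin d → ℝ) (r R : ℝ) (hr : 0 < r) (hrR : r < R)
    (hg : Good I p q R) (hfin : ν (closedBall q R) ≠ ⊤) :
    ν (closedBall p r) ≤ ν (closedBall q r) := by
  have key : ∀ ε, 0 < ε → r + ε ≤ R → ν (closedBall p r) ≤ ν (closedBall q (r + ε)) := by
    intro ε hε hεR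
    obtain ⟨p', hp'⟩ := exists_rat_near p (show 0 < ε / 4 by linarith)
    obtain ⟨q', hq'⟩ := exists_rat_near q (show 0 < ε / 4 by linarith)
    obtain ⟨r', h1, h2⟩ := exists_rat_btwn (show r + ε / 4 < r + ε / 2 by linarith)
    have hr' : (0 : ℝ) < r' := by linarith
    have hpi := fun i => (dist_le_pi_dist (fun i j => (p' i j : ℝ)) p i).trans hp'
    have hqi := fun i => (dist_le_pi_dist (fun i j => (q' i j : ℝ)) q i).trans hq'
    have hg' : Good I (fun i j => (p' i j : ℝ)) (fun i j => (q' i j : ℝ)) r' :=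
      hg.mono (fun i => closedBall_subset_closedBall' (by linarith [hpi i]))
        (fun i => closedBall_subset_closedBall' (by linarith [hqi i]))
    calc ν (closedBall p r) ≤ ν (closedBall (fun i j => (p' i j : ℝ)) r') :=
          measure_mono (closedBall_subset_closedBall' (by rw [dist_comm]; linarith))
      _ = ν (closedBall (fun i j => (q' i j : ℝ)) r') :=
          rational_exchange ν hν p' q' r' (by exact_mod_cast hr') hg'
      _ ≤ _ := measure_mono (closedBall_subset_closedBall' (by linarith))
  have hlim := tendsto_measure_cthickening_of_isClosed (μ := ν) (s := closedBall q r)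
    ⟨R - r, by linarith, by
      rw [cthickening_closedBall (by linarith) hr.le]; simpa using hfin⟩ isClosed_closedBall
  have hlim' := hlim.mono_left (nhdsWithin_le_nhds (s := Set.Ioi 0))
  refine ge_of_tendsto hlim' ?_
  filter_upwards [Ioo_mem_nhdsGT (show 0 < R - r by linarith)] with ε hε
  rw [cthickening_closedBall hε.1.le hr.le, add_comm]
  exact key ε hε.1 (by linarith [hε.2])

lemma germ_eq {d l : ℕ} {I : Set (Fin d → ℝ)} (hI : IsOpen I)
    (ν : Measure (Fin l → Fin d → ℝ))
    (hν : ∀ T ∈ rationalCubeExchangeGroup d I, ν.map (fun p => ⇑T⁻¹ ∘ p) = ν)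
    (hfin : ∀ p ∈ distinctTuples d l I, ∀ᶠ R in 𝓝[>] (0 : ℝ), ν (closedBall p R) ≠ ⊤)
    (p q : Fin l → Fin d → ℝ) (hp : p ∈ distinctTuples d l I) (hq : q ∈ distinctTuples d l I) :
    ∀ᶠ r in 𝓝[>] (0 : ℝ), ν (closedBall p r) = ν (closedBall q r) := by
  have main : ∀ p q : Fin l → Fin d → ℝ, p ∈ distinctTuples d l I → q ∈ distinctTuples d l I →
      (∀ i j, p i ≠ q j) → ∀ᶠ r in 𝓝[>] (0 : ℝ), ν (closedBall p r) = ν (closedBall q r) := by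
    intro p q hp hq hpq
    obtain ⟨R, ⟨⟨hg, hf1⟩, hf2⟩, hR⟩ := (((good_eventually hI hp hq hpq).and (hfin p hp)).and
      (hfin q hq)).and self_mem_nhdsWithin |>.exists
    filter_upwards [Ioo_mem_nhdsGT (show 0 < R from hR)] with r hr
    exact le_antisymm (exchange_le ν hν p q r R hr.1 hr.2 hg hf2)
      (exchange_le ν hν q p r R hr.1 hr.2 hg.symm hf1)
  by_cases hsub : Subsingleton (Fin l → Fin d → ℝ)
  · rw [Subsingleton.elim p q]; simp
  have hl : Nonempty (Fin l) := by
    by_contra h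
    rw [not_nonempty_iff] at h
    exact hsub inferInstance
  have hd : Nonempty (Fin d) := by
    by_contra h
    rw [not_nonempty_iff] at h
    exact hsub inferInstance
  obtain ⟨i0⟩ := hl
  have hinf : I.Infinite := infinite_of_mem_nhds (p i0) (hI.mem_nhds (hp.2 i0))
  have hinf' : (I \ (Set.range p ∪ Set.range q)).Infinite :=
    hinf.sdiff ((Set.finite_range p).union (Set.finite_range q))
  let e := hinf'.natEmbedding
  let s : Fin l → Fin d → ℝ := fun i => (e i : Fin d → ℝ)
  have hs : s ∈ distinctTuples d l I :=
    ⟨fun i j h => Fin.ext (e.injective (Subtype.ext h)), fun i => (e i).2.1⟩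
  have h1 := main p s hp hs fun i j h => (e j).2.2 (Or.inl ⟨i, h⟩)
  have h2 := main q s hq hs fun i j h => (e j).2.2 (Or.inr ⟨i, h⟩)
  filter_upwards [h1, h2] with r h1 h2
  rw [h1, h2]

lemma local_prop {d l : ℕ} (ν : Measure (Fin l → Fin d → ℝ)) (U : Set (Fin l → Fin d → ℝ))
    (hU : IsOpen U) (hUne : U.Nonempty) (hνU : ν U ≠ ⊤) (hvU : volume U ≠ ⊤)
    (N V : ℝ → ENNReal) (hN : ∀ x ∈ U, ∀ᶠ r in 𝓝[>] (0 : ℝ), ν (closedBall x r) = N r)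
    (hV : ∀ x ∈ U, ∀ᶠ r in 𝓝[>] (0 : ℝ), volume (closedBall x r) = V r)
    (hN0 : ∀ᶠ r in 𝓝[>] (0 : ℝ), N r ≠ 0 ∧ N r ≠ ⊤)
    (hV0 : ∀ᶠ r in 𝓝[>] (0 : ℝ), V r ≠ 0 ∧ V r ≠ ⊤) :
    ∃ c : ENNReal, c ≠ 0 ∧ c ≠ ⊤ ∧ Tendsto (fun r => N r / V r) (𝓝[>] 0) (𝓝 c) ∧
      ν.restrict U = c • volume.restrict U := by
  have hsub : ∀ x ∈ U, ∀ᶠ R in 𝓝[>] (0 : ℝ), closedBall x R ⊆ U := by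
    intro x hx
    obtain ⟨ε, hε, h⟩ := Metric.isOpen_iff.1 hU x hx
    filter_upwards [Ioo_mem_nhdsGT hε] with R hR
    exact (closedBall_subset_ball hR.2).trans h
  have hvpos : volume U ≠ 0 := (hU.measure_pos _ hUne).ne'
  have hνpos : ν U ≠ 0 := by
    obtain ⟨x, hx⟩ := hUne
    obtain ⟨r, ⟨h1, h2⟩, h3⟩ := ((hN x hx).and hN0).and (hsub x hx) |>.exists
    intro h0
    exact h2.1 (h1 ▸ measure_mono_null h3 h0)
  have : IsFiniteMeasure (ν.restrict U) := ⟨by simpa using hνU.lt_top⟩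
  have : IsFiniteMeasure ((volume : Measure (Fin l → Fin d → ℝ)).restrict U) :=
    ⟨by simpa using hvU.lt_top⟩
  have hne1 : ((volume : Measure (Fin l → Fin d → ℝ)).restrict U) ≠ 0 := by
    simpa [Measure.restrict_eq_zero] using hvpos
  have hne2 : (ν.restrict U) ≠ 0 := by simpa [Measure.restrict_eq_zero] using hνpos
  have hA : ∀ᵐ x ∂(volume.restrict U), Tendsto (fun r => N r / V r) (𝓝[>] 0)
      (𝓝 ((ν.restrict U).rnDeriv (volume.restrict U) x)) := by
    filter_upwards [Besicovitch.ae_tendsto_rnDeriv (ν.restrict U) (volume.restrict U),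
      ae_restrict_mem hU.measurableSet] with x hx hxU
    refine hx.congr' ?_
    filter_upwards [hN x hxU, hV x hxU, hsub x hxU] with r h1 h2 h3
    rw [Measure.restrict_eq_self _ h3, Measure.restrict_eq_self _ h3, h1, h2]
  have hB : ∀ᵐ x ∂(ν.restrict U), Tendsto (fun r => V r / N r) (𝓝[>] 0)
      (𝓝 ((volume.restrict U).rnDeriv (ν.restrict U) x)) := by
    filter_upwards [Besicovitch.ae_tendsto_rnDeriv (volume.restrict U) (ν.restrict U),
      ae_restrict_mem hU.measurableSet] with x hx hxU
    refine hx.congr' ?_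
    filter_upwards [hN x hxU, hV x hxU, hsub x hxU] with r h1 h2 h3
    rw [Measure.restrict_eq_self _ h3, Measure.restrict_eq_self _ h3, h1, h2]
  have : (ae ((volume : Measure (Fin l → Fin d → ℝ)).restrict U)).NeBot := ae_neBot.2 hne1
  have : (ae (ν.restrict U)).NeBot := ae_neBot.2 hne2
  obtain ⟨x, hx, hxt⟩ := (hA.and
    (Measure.rnDeriv_lt_top (ν.restrict U) (volume.restrict U))).exists
  obtain ⟨y, hy, hyt⟩ := (hB.and
    (Measure.rnDeriv_lt_top (volume.restrict U) (ν.restrict U))).exists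
  set c := (ν.restrict U).rnDeriv (volume.restrict U) x with hc
  set c' := (volume.restrict U).rnDeriv (ν.restrict U) y with hc'
  have hcc : c * c' = 1 := by
    refine tendsto_nhds_unique (ENNReal.Tendsto.mul hx (Or.inr hyt.ne) hy (Or.inr hxt.ne)) ?_
    refine tendsto_const_nhds.congr' ?_
    filter_upwards [hN0, hV0] with r h1 h2
    rw [div_eq_mul_inv, div_eq_mul_inv, mul_assoc, ← mul_assoc (V r)⁻¹,
      ENNReal.inv_mul_cancel h2.1 h2.2, one_mul, ENNReal.mul_inv_cancel h1.1 h1.2]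
  have hle1 : c • volume.restrict U ≤ ν.restrict U := by
    refine le_trans (le_of_eq ?_) (Measure.withDensity_rnDeriv_le (ν.restrict U) (volume.restrict U))
    rw [← withDensity_const]
    refine withDensity_congr_ae ?_
    filter_upwards [hA] with z hz using tendsto_nhds_unique hx hz
  have hle2 : c' • ν.restrict U ≤ volume.restrict U := by
    refine le_trans (le_of_eq ?_) (Measure.withDensity_rnDeriv_le (volume.restrict U) (ν.restrict U))
    rw [← withDensity_const]
    refine withDensity_congr_ae ?_
    filter_upwards [hB] with z hz using tendsto_nhds_unique hy hz
  refine ⟨c, ?_, hxt.ne, hx, le_antisymm ?_ hle1⟩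
  · intro h; simp [h] at hcc
  · calc ν.restrict U = c • (c' • ν.restrict U) := by rw [smul_smul, hcc, one_smul]
      _ ≤ _ := by gcongr

lemma global_prop {d l : ℕ} {I : Set (Fin d → ℝ)} (hI : IsOpen I)
    (ν : Measure (Fin l → Fin d → ℝ))
    (hν : ∀ T ∈ rationalCubeExchangeGroup d I, ν.map (fun p => ⇑T⁻¹ ∘ p) = ν)
    (hfin : ∀ p ∈ distinctTuples d l I, ∀ᶠ R in 𝓝[>] (0 : ℝ), ν (closedBall p R) ≠ ⊤)
    (hpos : ν (distinctTuples d l I) ≠ 0) :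
    ∃ c : ENNReal, c ≠ 0 ∧ c ≠ ⊤ ∧
      ν.restrict (distinctTuples d l I) = c • volume.restrict (distinctTuples d l I) := by
  set Δ := distinctTuples d l I with hΔ
  have hop : IsOpen Δ := isOpen_distinct hI
  obtain ⟨p0, hp0⟩ : Δ.Nonempty := nonempty_of_measure_ne_zero hpos
  set N : ℝ → ENNReal := fun r => ν (closedBall p0 r)
  set V : ℝ → ENNReal := fun r => volume (closedBall p0 r)
  have hN : ∀ x ∈ Δ, ∀ᶠ r in 𝓝[>] (0 : ℝ), ν (closedBall x r) = N r :=
    fun x hx => germ_eq hI ν hν hfin x p0 hx hp0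
  have hV : ∀ x ∈ Δ, ∀ᶠ r in 𝓝[>] (0 : ℝ), volume (closedBall x r) = V r := by
    intro x _
    refine Eventually.of_forall fun r => ?_
    simp only [V]
    rw [Measure.addHaar_closedBall_center, ← Measure.addHaar_closedBall_center _ p0]
  have hNpos : ∀ r > 0, N r ≠ 0 := by
    intro r hr h0
    apply hpos
    refine measure_null_of_locally_null Δ fun x hx => ?_
    obtain ⟨s, ⟨h1, h2⟩⟩ := ((hN x hx).and (Ioo_mem_nhdsGT hr)).exists
    refine ⟨closedBall x s, mem_nhdsWithin_of_mem_nhds (closedBall_mem_nhds x h2.1), ?_⟩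
    rw [h1]
    exact measure_mono_null (closedBall_subset_closedBall h2.2.le) h0
  have hN0 : ∀ᶠ r in 𝓝[>] (0 : ℝ), N r ≠ 0 ∧ N r ≠ ⊤ := by
    filter_upwards [hfin p0 hp0, self_mem_nhdsWithin] with r h1 h2 using ⟨hNpos r h2, h1⟩
  have hV0 : ∀ᶠ r in 𝓝[>] (0 : ℝ), V r ≠ 0 ∧ V r ≠ ⊤ := by
    filter_upwards [self_mem_nhdsWithin] with r h2
    exact ⟨(measure_closedBall_pos _ _ h2).ne', measure_closedBall_lt_top.ne⟩
  have hloc : ∀ x : Δ, ∃ ρ > 0, ball x.1 ρ ⊆ Δ ∧ ∃ c : ENNReal, c ≠ 0 ∧ c ≠ ⊤ ∧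
      Tendsto (fun r => N r / V r) (𝓝[>] 0) (𝓝 c) ∧
      ν.restrict (ball x.1 ρ) = c • volume.restrict (ball x.1 ρ) := by
    rintro ⟨x, hx⟩
    obtain ⟨ε, hε, h⟩ := Metric.isOpen_iff.1 hop x hx
    obtain ⟨ρ, hρ, hρ'⟩ := ((hfin x hx).and (Ioo_mem_nhdsGT hε)).exists
    have hs : ball x ρ ⊆ Δ := (ball_subset_ball hρ'.2.le).trans h
    exact ⟨ρ, hρ'.1, hs, local_prop ν (ball x ρ) isOpen_ball ⟨x, mem_ball_self hρ'.1⟩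
      (ne_top_of_le_ne_top hρ (measure_mono ball_subset_closedBall)) measure_ball_lt_top.ne N V
      (fun y hy => hN y (hs hy)) (fun y hy => hV y (hs hy)) hN0 hV0⟩
  choose ρ hρ hρs c hc0 hct hclim hceq using hloc
  have hcconst : ∀ x, c x = c ⟨p0, hp0⟩ := fun x => tendsto_nhds_unique (hclim x) (hclim _)
  refine ⟨c ⟨p0, hp0⟩, hc0 _, hct _, ?_⟩
  obtain ⟨S, hS, hSU⟩ := TopologicalSpace.isOpen_iUnion_countable
    (fun x : Δ => ball x.1 (ρ x)) (fun x => isOpen_ball)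
  have hcov : Δ = ⋃ x ∈ S, ball x.1 (ρ x) := by
    rw [hSU]
    ext y
    simp only [Set.mem_iUnion]
    exact ⟨fun hy => ⟨⟨y, hy⟩, mem_ball_self (hρ _)⟩, fun ⟨x, hx⟩ => hρs x hx⟩
  generalize c ⟨p0, hp0⟩ = c0 at hcconst
  rw [← Measure.restrict_smul, hcov, Measure.restrict_biUnion_congr hS]
  intro x _
  rw [hceq x, hcconst x, Measure.restrict_smul]

end CubeEx

/-- Let `I ⊂ ℝ^d` be bounded open, `F` a positive continuous symmetric
function on the `l`-tuples of distinct points of `I`, and `μ` a symmetric Borel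
probability measure concentrated on such tuples, such that for every `T ∈ 𝔊₀(I)` the
measure `μ∘T : A ↦ μ(T̂ A)` has density `F(T̂𝐩)/F(𝐩)` with respect to `μ`.  Then the same
holds for every `T ∈ 𝔊(I)`, and `μ` is a positive constant multiple of `F(𝐩) d𝐩` on the
distinct tuples. -/
theorem quasi_invariant_measure_is_orthogonal_polynomial_type
    (d l : ℕ) (I : Set (Fin d → ℝ)) (hI_open : IsOpen I) (hI_bdd : Bornology.IsBounded I)
    (F : (Fin l → Fin d → ℝ) → ℝ)
    (hF_pos : ∀ p ∈ distinctTuples d l I, 0 < F p)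
    (hF_cont : ContinuousOn F (distinctTuples d l I))
    (hF_symm : ∀ (σ : Equiv.Perm (Fin l)) (p : Fin l → Fin d → ℝ), F (p ∘ ⇑σ) = F p)
    (μ : Measure (Fin l → Fin d → ℝ)) [IsProbabilityMeasure μ]
    (hμ_symm : ∀ σ : Equiv.Perm (Fin l), μ.map (fun p => p ∘ ⇑σ) = μ)
    (hμ_conc : ∀ᵐ p ∂μ, p ∈ distinctTuples d l I)
    (hμ_qi : ∀ T ∈ rationalCubeExchangeGroup d I,
      μ.map (fun p => ⇑T⁻¹ ∘ p) =
        μ.withDensity (fun p => ENNReal.ofReal (F (⇑T ∘ p) / F p))) :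
    (∀ T ∈ cubeExchangeGroup d I,
      μ.map (fun p => ⇑T⁻¹ ∘ p) =
        μ.withDensity (fun p => ENNReal.ofReal (F (⇑T ∘ p) / F p))) ∧
    ∃ c : ℝ, 0 < c ∧ ∀ A : Set (Fin l → Fin d → ℝ), MeasurableSet A →
      μ A = ∫⁻ p in A ∩ distinctTuples d l I, ENNReal.ofReal (c * F p) ∂volume := by
  classical
  set Δ := distinctTuples d l I with hΔ
  have hop : IsOpen Δ := CubeEx.isOpen_distinct hI_open
  have hΔm : MeasurableSet Δ := hop.measurableSet
  have hGm : Measurable (Δ.indicator F) := by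
    rw [← Set.piecewise_eq_indicator]
    exact hF_cont.measurable_piecewise continuous_zero.continuousOn hΔm
  set f : (Fin l → Fin d → ℝ) → ENNReal := fun p => ENNReal.ofReal (Δ.indicator F p) with hf
  have hfm : Measurable f := ENNReal.measurable_ofReal.comp hGm
  have hfim : Measurable (fun x => (f x)⁻¹) := hfm.inv
  have hfΔ : ∀ p ∈ Δ, f p = ENNReal.ofReal (F p) := by
    intro p hp; simp only [hf, Set.indicator_of_mem hp]
  have hfpos : ∀ p ∈ Δ, f p ≠ 0 ∧ f p ≠ ⊤ := by
    intro p hp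
    rw [hfΔ p hp]
    exact ⟨(ENNReal.ofReal_pos.2 (hF_pos p hp)).ne', ENNReal.ofReal_ne_top⟩
  have hTmem : ∀ T ∈ cubeExchangeGroup d I, ∀ p ∈ Δ, ⇑T ∘ p ∈ Δ := by
    intro T hT p hp
    exact ⟨T.injective.comp hp.1, fun i => (CubeEx.group_props T hT).2.2.1 _ (hp.2 i)⟩
  have hTmeas : ∀ T ∈ cubeExchangeGroup d I,
      Measurable (fun p : Fin l → Fin d → ℝ => ⇑T ∘ p) := by
    intro T hT
    exact measurable_pi_lambda _ fun i =>
      (CubeEx.group_props T hT).1.measurable.comp (measurable_pi_apply i)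
  have hTT : ∀ (T : Equiv.Perm (Fin d → ℝ)) (p : Fin l → Fin d → ℝ), ⇑T ∘ (⇑T⁻¹ ∘ p) = p := by
    intro T p; funext i; simp
  have hconv : ∀ T ∈ cubeExchangeGroup d I,
      μ.withDensity (fun p => ENNReal.ofReal (F (⇑T ∘ p) / F p)) =
        μ.withDensity (fun p => f (⇑T ∘ p) / f p) := by
    intro T hT
    refine withDensity_congr_ae ?_
    filter_upwards [hμ_conc] with p hp
    rw [hfΔ p hp, hfΔ _ (hTmem T hT p hp), ENNReal.ofReal_div_of_pos (hF_pos p hp)]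
  set ν := μ.withDensity (fun x => (f x)⁻¹) with hνdef
  have hνinv : ∀ T ∈ rationalCubeExchangeGroup d I, ν.map (fun p => ⇑T⁻¹ ∘ p) = ν := by
    intro T hT0
    have hT := CubeEx.rational_le hT0
    have hq := hμ_qi T hT0
    rw [hconv T hT] at hq
    refine CubeEx.invariant_of_qi μ (hTmeas T hT) (hTmeas _ (inv_mem hT)) (hTT T) hfm ?_ hq
    filter_upwards [hμ_conc] with p hp using hfpos _ (hTmem T hT p hp)
  have hμν : μ = ν.withDensity f := by
    rw [hνdef, ← withDensity_mul _ hfim hfm]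
    conv_lhs => rw [← withDensity_one (μ := μ)]
    refine withDensity_congr_ae ?_
    filter_upwards [hμ_conc] with p hp
    simp only [Pi.mul_apply, Pi.one_apply]
    rw [ENNReal.inv_mul_cancel (hfpos p hp).1 (hfpos p hp).2]
  have hfin : ∀ p ∈ Δ, ∀ᶠ R in nhdsWithin (0 : ℝ) (Set.Ioi 0), ν (closedBall p R) ≠ ⊤ := by
    intro p hp
    have h1 : ∀ᶠ x in nhds p, x ∈ Δ ∧ F p / 2 < F x :=
      Filter.Eventually.and (hop.mem_nhds hp) ((hF_cont.continuousAt (hop.mem_nhds hp)).eventually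
        (lt_mem_nhds (half_lt_self (hF_pos p hp))))
    obtain ⟨ε, hε, h⟩ := Metric.eventually_nhds_iff_ball.1 h1
    filter_upwards [Ioo_mem_nhdsGT hε] with R hR
    have hFp : 0 < F p / 2 := half_pos (hF_pos p hp)
    have hle : ν (closedBall p R) ≤ (ENNReal.ofReal (F p / 2))⁻¹ * μ (closedBall p R) := by
      rw [hνdef, withDensity_apply _ measurableSet_closedBall, ← setLIntegral_const]
      refine setLIntegral_mono measurable_const fun x hx => ?_
      have hx' := h x (closedBall_subset_ball hR.2 hx)
      rw [hfΔ x hx'.1]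
      exact ENNReal.inv_le_inv.2 (ENNReal.ofReal_le_ofReal hx'.2.le)
    refine ne_top_of_le_ne_top (ENNReal.mul_ne_top ?_ (measure_ne_top _ _)) hle
    exact ENNReal.inv_ne_top.2 (ENNReal.ofReal_pos.2 hFp).ne'
  have hμΔc : μ Δᶜ = 0 := hμ_conc
  have hμΔ : μ Δ = 1 := (prob_compl_eq_zero_iff hΔm).1 hμΔc
  have hpos : ν Δ ≠ 0 := by
    intro h0
    have : μ Δ = 0 := by
      rw [hμν]
      exact withDensity_absolutelyContinuous ν f h0
    rw [hμΔ] at this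
    exact one_ne_zero this
  obtain ⟨c, hc0, hct, hceq⟩ := CubeEx.global_prop hI_open ν hνinv hfin hpos
  have hνc : ∀ᵐ p ∂ν, p ∈ Δ := (withDensity_absolutelyContinuous μ _) hμΔc
  have hνeq : ν = c • volume.restrict Δ := by
    rw [← hΔ] at hceq
    rw [← hceq, Measure.restrict_eq_self_of_ae_mem hνc]
  refine ⟨?_, c.toReal, ENNReal.toReal_pos hc0 hct, ?_⟩
  · intro T hT
    rw [hconv T hT]
    refine CubeEx.qi_of_invariant μ ν (hTmeas T hT) (hTmeas _ (inv_mem hT)) (hTT T) hfm ?_ hμν ?_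
    · filter_upwards [hνc] with p hp using hfpos p hp
    · have hmp : MeasurePreserving (fun p : Fin l → Fin d → ℝ => ⇑T⁻¹ ∘ p) volume volume :=
        volume_preserving_pi (fun _ : Fin l => (CubeEx.group_props T hT).2.1)
      have hpre : (fun p : Fin l → Fin d → ℝ => ⇑T⁻¹ ∘ p) ⁻¹' Δ = Δ := by
        ext p
        constructor
        · intro h
          have := hTmem T hT _ h
          rwa [hTT] at this
        · intro h
          exact hTmem _ (inv_mem hT) _ h
      have h2 := (hmp.restrict_preimage hΔm).map_eq
      rw [hpre] at h2
      rw [hνeq, Measure.map_smul, h2]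
  · intro A hA
    rw [hμν, withDensity_apply _ hA, hνeq, Measure.restrict_smul, lintegral_smul_measure,
      Measure.restrict_restrict hA, smul_eq_mul, ← lintegral_const_mul _ hfm]
    refine setLIntegral_congr_fun (hA.inter hΔm) fun p hp => ?_
    rw [hfΔ p hp.2, ENNReal.ofReal_mul ENNReal.toReal_nonneg, ENNReal.ofReal_toReal hct]
end

section
/- Let S and Q be standard Borel spaces, let μ be a Borel probability measure on S, let π : S → Q be a Borel map, and let (ν_q)_{q∈Q} be a disintegration of μ over π: a Borel family of probability measures on S such that ν_q(S ∖ π^{-1}{q}) = 0 for π_*μ-almost every q and μ(A) = ∫_Q ν_q(A) d(π_*μ)(q) for every Borel set A ⊆ S. Let T : S → S be a Borel bijection with π ∘ T = π, and suppose the measure μ∘T defined by (μ∘T)(A) = μ(T(A)) is absolutely continuous with respect to μ with d(μ∘T)/dμ = F holding μ-almost surely, for a Borel function F : S → [0,∞). Then for π_*μ-almost every q ∈ Q, the measure ν_q∘T (defined by (ν_q∘T)(A) = ν_q(T(A))) is absolutely continuous with respect to ν_q and d(ν_q∘T)/dν_q = F holds ν_q-almost surely. -/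
open MeasureTheory

/-- Let `S`, `Q` be standard Borel spaces, `μ` a Borel probability measure
on `S`, `π : S → Q` Borel, and `(ν_q)` a disintegration of `μ` over `π`.  Let `T : S → S`
be a Borel bijection with `π ∘ T = π` such that `μ∘T` (where `(μ∘T)(A) = μ(T(A))`) is
absolutely continuous with respect to `μ` with density `F`.  Then for `π_*μ`-almost every
`q`, the measure `ν_q∘T` is absolutely continuous with respect to `ν_q` with the same
density `F`. -/
theorem conditional_measures_quasi_invariance
    {S Q : Type*} [Nonempty S] [MeasurableSpace S] [StandardBorelSpace S]
    [MeasurableSpace Q] [StandardBorelSpace Q]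
    (μ : Measure S) [IsProbabilityMeasure μ]
    (π : S → Q) (hπ : Measurable π)
    (ν : Q → Measure S) (hν_meas : Measurable ν)
    (hν_prob : ∀ q, IsProbabilityMeasure (ν q))
    (hν_fiber : ∀ᵐ q ∂(μ.map π), ν q (π ⁻¹' {q})ᶜ = 0)
    (hν_disint : ∀ A : Set S, MeasurableSet A → μ A = ∫⁻ q, ν q A ∂(μ.map π))
    (T : S → S) (hT_meas : Measurable T) (hT_bij : Function.Bijective T)
    (hTπ : π ∘ T = π)
    (F : S → ℝ) (hF_meas : Measurable F) (hF_nonneg : ∀ x, 0 ≤ F x)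
    (hRN : μ.map (Function.invFun T) = μ.withDensity (fun x => ENNReal.ofReal (F x))) :
    ∀ᵐ q ∂(μ.map π),
      (ν q).map (Function.invFun T) = (ν q).withDensity (fun x => ENNReal.ofReal (F x)) := by
  classical
  set g := Function.invFun T with hg_def
  have hTg : ∀ x, T (g x) = x := Function.rightInverse_invFun hT_bij.2
  have hgT : ∀ x, g (T x) = x := Function.leftInverse_invFun hT_bij.1
  have hTe : MeasurableEmbedding T := hT_meas.measurableEmbedding hT_bij.1
  have hg : Measurable g := by
    intro A hA
    have : g ⁻¹' A = T '' A := by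
      ext x
      constructor
      · intro hx
        exact ⟨g x, hx, hTg x⟩
      · rintro ⟨y, hy, rfl⟩
        simpa [hgT] using hy
    rw [this]
    exact hTe.measurableSet_image.2 hA
  have hπg : ∀ x, π (g x) = π x := by
    intro x
    have := congrFun hTπ (g x)
    simp only [Function.comp_apply, hTg] at this
    exact this.symm
  have hbind : (μ.map π).bind ν = μ := by
    ext A hA
    rw [Measure.bind_apply hA hν_meas.aemeasurable, hν_disint A hA]
  have : IsProbabilityMeasure (μ.map π) := Measure.isProbabilityMeasure_map hπ.aemeasurable
  have key : ∀ f : S → ENNReal, Measurable f → ∀ B : Set Q, MeasurableSet B →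
      ∫⁻ q in B, ∫⁻ x, f x ∂(ν q) ∂(μ.map π) = ∫⁻ x in π ⁻¹' B, f x ∂μ := by
    intro f hf B hB
    have h1 : ∫⁻ x in π ⁻¹' B, f x ∂μ
        = ∫⁻ q, ∫⁻ x, (π ⁻¹' B).indicator f x ∂(ν q) ∂(μ.map π) := by
      rw [← lintegral_indicator (hπ hB)]
      conv_lhs => rw [← hbind]
      exact Measure.lintegral_bind hν_meas.aemeasurable
        (hf.indicator (hπ hB)).aemeasurable
    rw [h1, ← lintegral_indicator hB]
    apply lintegral_congr_ae
    filter_upwards [hν_fiber] with q hq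
    have hae : ∀ᵐ x ∂(ν q), π x = q := by
      rw [ae_iff]
      exact hq
    by_cases hqB : q ∈ B
    · rw [Set.indicator_of_mem hqB]
      apply lintegral_congr_ae
      filter_upwards [hae] with x hx
      rw [Set.indicator_of_mem]
      simpa [hx] using hqB
    · rw [Set.indicator_of_notMem hqB, ← lintegral_zero (μ := ν q)]
      apply lintegral_congr_ae
      filter_upwards [hae] with x hx
      rw [Set.indicator_of_notMem]
      simpa [hx] using hqB
  have hFm : Measurable (fun x => ENNReal.ofReal (F x)) := hF_meas.ennreal_ofReal
  have hA : ∀ A : Set S, MeasurableSet A → ∀ᵐ q ∂(μ.map π),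
      (ν q).map g A = (ν q).withDensity (fun x => ENNReal.ofReal (F x)) A := by
    intro A hA
    have e1 : ∀ q, (ν q).map g A = ∫⁻ x, (g ⁻¹' A).indicator 1 x ∂(ν q) := by
      intro q
      rw [Measure.map_apply hg hA, lintegral_indicator_one (hg hA)]
    have e2 : ∀ q, (ν q).withDensity (fun x => ENNReal.ofReal (F x)) A
        = ∫⁻ x, A.indicator (fun x => ENNReal.ofReal (F x)) x ∂(ν q) := by
      intro q
      rw [withDensity_apply _ hA, lintegral_indicator hA]
    simp only [e1, e2]
    have m1 : Measurable ((g ⁻¹' A).indicator (1 : S → ENNReal)) :=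
      measurable_one.indicator (hg hA)
    have m2 := hFm.indicator hA
    refine ae_eq_of_forall_setLIntegral_eq_of_sigmaFinite
      ((Measure.measurable_lintegral m1).comp hν_meas)
      ((Measure.measurable_lintegral m2).comp hν_meas) ?_
    intro B hB _
    rw [key _ m1 B hB, key _ m2 B hB, lintegral_indicator_one (hg hA),
      Measure.restrict_apply (hg hA), lintegral_indicator hA, Measure.restrict_restrict hA,
      ← withDensity_apply _ (hA.inter (hπ hB)), ← hRN,
      Measure.map_apply hg (hA.inter (hπ hB))]
    congr 1
    ext x
    simp [hπg]
  let C := generateSetAlgebra (MeasurableSpace.countableGeneratingSet S)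
  have hCc : C.Countable :=
    countable_generateSetAlgebra (MeasurableSpace.countable_countableGeneratingSet)
  have hCg : MeasurableSpace.generateFrom C = ‹MeasurableSpace S› := by
    rw [generateFrom_generateSetAlgebra_eq, MeasurableSpace.generateFrom_countableGeneratingSet]
  have hCm : ∀ A ∈ C, MeasurableSet A := by
    intro A hAC
    rw [← hCg]
    exact MeasurableSpace.measurableSet_generateFrom hAC
  have hall : ∀ᵐ q ∂(μ.map π), ∀ A ∈ C,
      (ν q).map g A = (ν q).withDensity (fun x => ENNReal.ofReal (F x)) A :=
    (ae_ball_iff hCc).2 fun A hAC => hA A (hCm A hAC)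
  filter_upwards [hall, hA Set.univ MeasurableSet.univ] with q hq hu
  have := hν_prob q
  have : IsProbabilityMeasure ((ν q).map g) := Measure.isProbabilityMeasure_map hg.aemeasurable
  refine ext_of_generate_finite C hCg.symm ?_ hq hu
  intro s hs t ht _
  exact isSetAlgebra_generateSetAlgebra.inter_mem hs ht
end

section
/- For real s > −1 and t > 0, let 𝐉_s(t) = Σ_{k=0}^{∞} ((−1)^k / (k! · Γ(k+s+1))) · (t/2)^{2k+s} be the Bessel function of the first kind of order s, and for x, y > 0 with x ≠ y let J_s(x,y) = ( √x · 𝐉_{s+1}(√x) · 𝐉_s(√y) − √y · 𝐉_{s+1}(√y) · 𝐉_s(√x) ) / (2(x−y)) be the Bessel kernel. Then for every s > −1 and all x, y > 0 with x ≠ y: J_s(x,y) = J_{s+2}(x,y) + ((s+1)/√(xy)) · 𝐉_{s+1}(√x) · 𝐉_{s+1}(√y). -/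
open scoped Real

/-- The Bessel function of the first kind of real order `s`, defined for `t > 0`
by its power series `𝐉_s(t) = Σ_k ((−1)^k / (k! Γ(k+s+1))) (t/2)^(2k+s)`
(real powers). -/
noncomputable def besselJ (s t : ℝ) : ℝ :=
  ∑' k : ℕ, ((-1 : ℝ) ^ k / ((Nat.factorial k : ℝ) * Real.Gamma ((k : ℝ) + s + 1))) *
    (t / 2) ^ (2 * (k : ℝ) + s)

/-- The Bessel kernel
`J_s(x,y) = (√x 𝐉_{s+1}(√x) 𝐉_s(√y) − √y 𝐉_{s+1}(√y) 𝐉_s(√x)) / (2(x−y))`. -/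
noncomputable def besselKernel (s x y : ℝ) : ℝ :=
  (Real.sqrt x * besselJ (s + 1) (Real.sqrt x) * besselJ s (Real.sqrt y) -
      Real.sqrt y * besselJ (s + 1) (Real.sqrt y) * besselJ s (Real.sqrt x)) /
    (2 * (x - y))

/-- Terms of the Bessel series. -/
noncomputable def besselTerm (s z : ℝ) (k : ℕ) : ℝ :=
  ((-1 : ℝ) ^ k / ((Nat.factorial k : ℝ) * Real.Gamma ((k : ℝ) + s + 1))) *
    z ^ (2 * (k : ℝ) + s)

theorem besselTerm_succ (s z : ℝ) (hs : -1 < s) (hz : 0 < z) (k : ℕ) :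
    besselTerm s z (k + 1) = -(z ^ 2 / (((k : ℝ) + 1) * ((k : ℝ) + s + 1))) * besselTerm s z k := by
  unfold besselTerm
  have hk : (0 : ℝ) ≤ k := Nat.cast_nonneg k
  have h1 : (0 : ℝ) < (k : ℝ) + s + 1 := by linarith
  have hG : Real.Gamma (((k + 1 : ℕ) : ℝ) + s + 1)
      = ((k : ℝ) + s + 1) * Real.Gamma ((k : ℝ) + s + 1) := by
    rw [← Real.Gamma_add_one h1.ne']
    congr 1
    push_cast
    ring
  have hp : z ^ (2 * ((k + 1 : ℕ) : ℝ) + s) = z ^ (2 * (k : ℝ) + s) * z ^ 2 := by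
    rw [← Real.rpow_natCast z 2, ← Real.rpow_add hz]
    congr 1
    push_cast
    ring
  have h2 := (Real.Gamma_pos_of_pos h1).ne'
  have h3 : (Nat.factorial k : ℝ) ≠ 0 := by positivity
  have h4 : (k : ℝ) + 1 ≠ 0 := by positivity
  have h5 := h1.ne'
  rw [hG, hp, Nat.factorial_succ, pow_succ]
  push_cast
  field_simp

theorem besselTerm_summable (s z : ℝ) (hs : -1 < s) (hz : 0 < z) :
    Summable (besselTerm s z) := by
  refine summable_of_ratio_norm_eventually_le (r := 1 / 2) (by norm_num) ?_
  obtain ⟨N, hN⟩ := exists_nat_ge (2 * z ^ 2)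
  filter_upwards [Filter.eventually_ge_atTop (N + 1)] with k hk
  have hk' : (N : ℝ) + 1 ≤ k := by exact_mod_cast hk
  have hN0 : (0 : ℝ) ≤ N := Nat.cast_nonneg N
  rw [besselTerm_succ s z hs hz, norm_mul]
  refine mul_le_mul_of_nonneg_right ?_ (norm_nonneg _)
  have h1 : (1 : ℝ) ≤ (k : ℝ) + s + 1 := by linarith
  have h2 : (0 : ℝ) < ((k : ℝ) + 1) * ((k : ℝ) + s + 1) := by
    apply mul_pos <;> linarith
  rw [norm_neg, Real.norm_of_nonneg (by positivity), div_le_iff₀ h2]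
  nlinarith

theorem besselTerm_rec (s z : ℝ) (hs : -1 < s) (hz : 0 < z) (k : ℕ) :
    besselTerm s z (k + 1) - (s + 1) / z * besselTerm (s + 1) z (k + 1)
      = - besselTerm (s + 2) z k := by
  unfold besselTerm
  have hk : (0 : ℝ) ≤ k := Nat.cast_nonneg k
  have h1 : (0 : ℝ) < (k : ℝ) + s + 2 := by linarith
  have e1 : ((k + 1 : ℕ) : ℝ) + s + 1 = (k : ℝ) + s + 2 := by push_cast; ring
  have e2 : ((k + 1 : ℕ) : ℝ) + (s + 1) + 1 = (k : ℝ) + s + 2 + 1 := by push_cast; ring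
  have e3 : (k : ℝ) + (s + 2) + 1 = (k : ℝ) + s + 2 + 1 := by ring
  have e4 : 2 * ((k + 1 : ℕ) : ℝ) + s = 2 * (k : ℝ) + (s + 2) := by push_cast; ring
  have e5 : 2 * ((k + 1 : ℕ) : ℝ) + (s + 1) = 2 * (k : ℝ) + (s + 2) + 1 := by push_cast; ring
  have h2 := (Real.Gamma_pos_of_pos h1).ne'
  have h3 : (Nat.factorial k : ℝ) ≠ 0 := by positivity
  have h4 : (k : ℝ) + 1 ≠ 0 := by positivity
  have h5 := h1.ne'
  rw [e1, e2, e3, e4, e5, Real.Gamma_add_one h5, Real.rpow_add_one hz.ne', Nat.factorial_succ,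
    pow_succ]
  push_cast
  field_simp
  ring

theorem besselTerm_rec_zero (s z : ℝ) (hs : -1 < s) (hz : 0 < z) :
    besselTerm s z 0 - (s + 1) / z * besselTerm (s + 1) z 0 = 0 := by
  unfold besselTerm
  have h1 : (0 : ℝ) < s + 1 := by linarith
  have h2 := (Real.Gamma_pos_of_pos h1).ne'
  have h5 := h1.ne'
  have hz' := hz.ne'
  simp only [Nat.cast_zero, zero_add, mul_zero, pow_zero, Nat.factorial_zero, Nat.cast_one, one_mul]
  rw [Real.Gamma_add_one h5, Real.rpow_add_one hz']
  field_simp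
  ring

theorem besselJ_rec (s t : ℝ) (hs : -1 < s) (ht : 0 < t) :
    t * (besselJ s t + besselJ (s + 2) t) = 2 * (s + 1) * besselJ (s + 1) t := by
  have hz : 0 < t / 2 := by positivity
  have S0 := besselTerm_summable s (t / 2) hs hz
  have S1 := besselTerm_summable (s + 1) (t / 2) (by linarith) hz
  have hd := S0.sub (S1.mul_left ((s + 1) / (t / 2)))
  have e := hd.tsum_eq_zero_add
  rw [S0.tsum_sub (S1.mul_left _), tsum_mul_left, besselTerm_rec_zero s _ hs hz, zero_add] at e
  simp only [besselTerm_rec s _ hs hz] at e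
  rw [tsum_neg] at e
  change besselJ s t - (s + 1) / (t / 2) * besselJ (s + 1) t = - besselJ (s + 2) t at e
  have : besselJ s t = (s + 1) / (t / 2) * besselJ (s + 1) t - besselJ (s + 2) t := by linarith
  rw [this]
  field_simp
  ring

/-- For every `s > −1` and all `x, y > 0` with `x ≠ y`:
`J_s(x,y) = J_{s+2}(x,y) + ((s+1)/√(xy)) 𝐉_{s+1}(√x) 𝐉_{s+1}(√y)`. -/
theorem besselKernel_recurrence (s : ℝ) (hs : -1 < s)
    (x y : ℝ) (hx : 0 < x) (hy : 0 < y) (hxy : x ≠ y) :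
    besselKernel s x y =
      besselKernel (s + 2) x y +
        ((s + 1) / Real.sqrt (x * y)) * besselJ (s + 1) (Real.sqrt x) *
          besselJ (s + 1) (Real.sqrt y) := by
  have ha : 0 < √x := Real.sqrt_pos.mpr hx
  have hb : 0 < √y := Real.sqrt_pos.mpr hy
  have hxa : √x ^ 2 = x := Real.sq_sqrt hx.le
  have hyb : √y ^ 2 = y := Real.sq_sqrt hy.le
  have r1 := besselJ_rec s (√x) hs ha
  have r2 := besselJ_rec s (√y) hs hb
  have r3 := besselJ_rec (s + 1) (√x) (by linarith) ha
  have r4 := besselJ_rec (s + 1) (√y) (by linarith) hb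
  rw [show s + 1 + 2 = s + 2 + 1 by ring, show s + 1 + 1 = s + 2 by ring] at r3 r4
  have hne : x - y ≠ 0 := sub_ne_zero.mpr hxy
  unfold besselKernel
  rw [Real.sqrt_mul hx.le]
  generalize besselJ s (√x) = A0 at *
  generalize besselJ s (√y) = B0 at *
  generalize besselJ (s + 1) (√x) = A1 at *
  generalize besselJ (s + 1) (√y) = B1 at *
  generalize besselJ (s + 2) (√x) = A2 at *
  generalize besselJ (s + 2) (√y) = B2 at *
  generalize besselJ (s + 2 + 1) (√x) = A3 at *
  generalize besselJ (s + 2 + 1) (√y) = B3 at *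
  generalize √x = a at *
  generalize √y = b at *
  subst hxa hyb
  have ha' := ha.ne'
  have hb' := hb.ne'
  have f1 : A0 = 2 * (s + 1) * A1 / a - A2 := by field_simp; linarith
  have f2 : B0 = 2 * (s + 1) * B1 / b - B2 := by field_simp; linarith
  have f3 : A3 = 2 * (s + 2) * A2 / a - A1 := by field_simp; linarith
  have f4 : B3 = 2 * (s + 2) * B2 / b - B1 := by field_simp; linarith
  rw [f1, f2, f3, f4]
  field_simp
  ring
end

section
/- Let I ⊂ ℝ^d be a bounded open set and let η be a Borel measure on ℝ^d concentrated on I and finite on compact subsets of I. Suppose that η(T(A)) = η(A) for every Borel set A ⊆ ℝ^d and every elementary cube exchange T with balls contained in I. Then there exists a constant c ≥ 0 such that η is c times the restriction of Lebesgue measure to I. -/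
open MeasureTheory Metric

open Filter Topology in
theorem cx_ball_eq (d : ℕ) (I : Set (Fin d → ℝ)) (η : Measure (Fin d → ℝ))
    (hη_inv : ∀ (T : Equiv.Perm (Fin d → ℝ)), (∃ D : CubeExchangeData d I, D.Realizes ⇑T) →
      ∀ A : Set (Fin d → ℝ), MeasurableSet A → η (⇑T '' A) = η A)
    (a b : Fin d → ℝ) (r : ℝ) (hr : 0 < r) (ha : closedBall a r ⊆ I) (hb : closedBall b r ⊆ I)
    (hab : Disjoint (closedBall a r) (closedBall b r)) :
    η (closedBall a r) = η (closedBall b r) := by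
  classical
  let f : (Fin d → ℝ) → (Fin d → ℝ) := fun x =>
    if x ∈ closedBall a r then x + (b - a) else if x ∈ closedBall b r then x + (a - b) else x
  have h1 : ∀ x ∈ closedBall a r, x + (b - a) ∈ closedBall b r := by
    intro x hx
    rw [mem_closedBall, dist_eq_norm] at *
    convert hx using 2; abel
  have h2 : ∀ x ∈ closedBall b r, x + (a - b) ∈ closedBall a r := by
    intro x hx
    rw [mem_closedBall, dist_eq_norm] at *
    convert hx using 2; abel
  have nb : ∀ x ∈ closedBall b r, x ∉ closedBall a r := fun x hx hx' =>
    Set.disjoint_left.1 hab hx' hx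
  have fa : ∀ x ∈ closedBall a r, f x = x + (b - a) := fun x hx => if_pos hx
  have fb : ∀ x ∈ closedBall b r, f x = x + (a - b) := fun x hx => by
    simp only [f]; rw [if_neg (nb x hx), if_pos hx]
  have fc : ∀ x, x ∉ closedBall a r → x ∉ closedBall b r → f x = x := fun x hx hx' => by
    simp only [f]; rw [if_neg hx, if_neg hx']
  have hf : Function.Involutive f := by
    intro x
    by_cases hx : x ∈ closedBall a r
    · rw [fa x hx, fb _ (h1 x hx)]; abel
    · by_cases hx' : x ∈ closedBall b r
      · rw [fb x hx', fa _ (h2 x hx')]; abel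
      · rw [fc x hx hx', fc x hx hx']
  let D : CubeExchangeData d I :=
    { k := 1
      a := fun _ => a
      a' := fun _ => b
      r := fun _ => r
      r_pos := fun _ => hr
      disjoint := by
        rintro (i | i) (j | j) hij
        · exact absurd (by rw [Subsingleton.elim i j]) hij
        · exact hab
        · exact hab.symm
        · exact absurd (by rw [Subsingleton.elim i j]) hij
      subset := fun _ => ⟨ha, hb⟩ }
  have key := hη_inv hf.toPerm ⟨D, fun _ x hx => fa x hx, fun _ x hx => fb x hx,
    fun x hx => fc x (hx 0).1 (hx 0).2⟩ (closedBall a r) isClosed_closedBall.measurableSet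
  have im : (hf.toPerm : (Fin d → ℝ) → (Fin d → ℝ)) '' closedBall a r = closedBall b r := by
    ext y
    constructor
    · rintro ⟨x, hx, rfl⟩
      change f x ∈ _
      rw [fa x hx]; exact h1 x hx
    · intro hy
      refine ⟨y + (a - b), h2 y hy, ?_⟩
      change f _ = _
      rw [fa _ (h2 y hy)]; abel
  rw [← key, im]

open Filter Topology in
theorem cx_eventually_sub (d : ℕ) (I : Set (Fin d → ℝ)) (hI : IsOpen I) (x : Fin d → ℝ)
    (hx : x ∈ I) : ∀ᶠ r in 𝓝[>] (0 : ℝ), closedBall x r ⊆ I := by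
  obtain ⟨ε, hε, h⟩ := Metric.nhds_basis_closedBall.mem_iff.1 (hI.mem_nhds hx)
  filter_upwards [Ioc_mem_nhdsGT hε] with r hr
  exact (closedBall_subset_closedBall hr.2).trans h

open Filter Topology in
theorem cx_eventually_eq (d : ℕ) (I : Set (Fin d → ℝ)) (hI : IsOpen I) (η : Measure (Fin d → ℝ))
    (hη_inv : ∀ (T : Equiv.Perm (Fin d → ℝ)), (∃ D : CubeExchangeData d I, D.Realizes ⇑T) →
      ∀ A : Set (Fin d → ℝ), MeasurableSet A → η (⇑T '' A) = η A)
    (x y : Fin d → ℝ) (hx : x ∈ I) (hy : y ∈ I) :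
    ∀ᶠ r in 𝓝[>] (0 : ℝ), η (closedBall x r) = η (closedBall y r) := by
  rcases eq_or_ne x y with rfl | hxy
  · exact Eventually.of_forall fun _ => rfl
  · have hd : 0 < dist x y / 3 := by have := dist_pos.2 hxy; positivity
    filter_upwards [cx_eventually_sub d I hI x hx, cx_eventually_sub d I hI y hy,
      Ioc_mem_nhdsGT hd] with r h1 h2 h3
    exact cx_ball_eq d I η hη_inv x y r h3.1 h1 h2
      (closedBall_disjoint_closedBall (by linarith [h3.1, h3.2]))

open Filter Topology in
theorem cx_local (d : ℕ) (V : Set (Fin d → ℝ)) (hV : IsOpen V) (μ : Measure (Fin d → ℝ))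
    [IsFiniteMeasure μ] (hVfin : volume V ≠ ⊤) (c : NNReal)
    (h : ∀ x ∈ V, Tendsto (fun r => μ (closedBall x r) / volume (closedBall x r)) (𝓝[>] 0)
      (𝓝 (c : ENNReal))) (s : Set (Fin d → ℝ)) (hs : s ⊆ V) : μ s = c * volume s := by
  have hsfin : volume s ≠ ⊤ := ((measure_mono hs).trans_lt hVfin.lt_top).ne
  have ev : ∀ ε : NNReal, 0 < ε → ∀ x ∈ V, ∀ᶠ r in 𝓝[>] (0 : ℝ),
      μ (closedBall x r) ≤ ((c + ε : NNReal) : ENNReal) * volume (closedBall x r) ∧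
      c * volume (closedBall x r) ≤ μ (closedBall x r) + ε * volume (closedBall x r) := by
    intro ε hε x hx
    have := (ENNReal.tendsto_nhds ENNReal.coe_ne_top).1 (h x hx) ε (ENNReal.coe_pos.2 hε)
    filter_upwards [this, self_mem_nhdsWithin] with r hr hr0
    have p : volume (closedBall x r) ≠ 0 := (measure_closedBall_pos volume x hr0).ne'
    have q : volume (closedBall x r) ≠ ⊤ := measure_closedBall_lt_top.ne
    have e : μ (closedBall x r) = μ (closedBall x r) / volume (closedBall x r)
      * volume (closedBall x r) := (ENNReal.div_mul_cancel p q).symm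
    constructor
    · rw [e, ENNReal.coe_add]; gcongr; exact hr.2
    · rw [e, ← add_mul]; gcongr; exact tsub_le_iff_right.1 hr.1
  apply le_antisymm
  · have : ∀ ε : NNReal, 0 < ε → μ s ≤ ((c + ε : NNReal) : ENNReal) * volume s := by
      intro ε hε
      have := (Besicovitch.vitaliFamily μ).measure_le_of_frequently_le
        ((c + ε : NNReal) • volume) (Measure.AbsolutelyContinuous.refl μ) s (by
          intro x hx
          apply (Besicovitch.tendsto_filterAt μ x).frequently
          exact ((ev ε hε x (hs hx)).mono fun r hr => hr.1).frequently)
      exact this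
    have lim : Tendsto (fun ε : NNReal => ((c + ε : NNReal) : ENNReal) * volume s) (𝓝[>] 0)
        (𝓝 (((c + 0 : NNReal) : ENNReal) * volume s)) := by
      refine ENNReal.Tendsto.mul_const ?_ (Or.inr hsfin)
      refine ENNReal.tendsto_coe.2 ?_
      exact ((continuous_const.add continuous_id).tendsto 0).mono_left nhdsWithin_le_nhds
    rw [add_zero] at lim
    refine ge_of_tendsto lim ?_
    filter_upwards [self_mem_nhdsWithin] with ε hε using this ε hε
  · have : ∀ ε : NNReal, 0 < ε → c * volume s ≤ μ s + ε * volume s := by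
      intro ε hε
      have lf : IsLocallyFiniteMeasure (μ + ε • (volume : Measure (Fin d → ℝ))) := by
        refine ⟨fun x => ⟨ball x 1, ball_mem_nhds x one_pos, ?_⟩⟩
        rw [Measure.add_apply]
        refine ENNReal.add_lt_top.2 ⟨measure_lt_top μ _, ?_⟩
        exact ENNReal.mul_lt_top ENNReal.coe_lt_top measure_ball_lt_top
      have := (Besicovitch.vitaliFamily (volume : Measure (Fin d → ℝ))).measure_le_of_frequently_le
        (ρ := c • volume)
        (μ + ε • volume) (Measure.smul_absolutelyContinuous) s (by
          intro x hx
          apply (Besicovitch.tendsto_filterAt volume x).frequently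
          exact ((ev ε hε x (hs hx)).mono fun r hr => hr.2).frequently)
      exact this
    have lim : Tendsto (fun ε : NNReal => μ s + (ε : ENNReal) * volume s) (𝓝[>] 0)
        (𝓝 (μ s + ((0 : NNReal) : ENNReal) * volume s)) := by
      refine Tendsto.const_add _ (ENNReal.Tendsto.mul_const ?_ (Or.inr hsfin))
      refine ENNReal.tendsto_coe.2 ?_
      exact (continuous_id.tendsto 0).mono_left nhdsWithin_le_nhds
    rw [ENNReal.coe_zero, zero_mul, add_zero] at lim
    refine ge_of_tendsto lim ?_
    filter_upwards [self_mem_nhdsWithin] with ε hε using this ε hε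

/-- Let `I ⊂ ℝ^d` be bounded open and `η` a Borel measure concentrated
on `I`, finite on compact subsets of `I`, and invariant under every elementary cube
exchange with balls contained in `I`.  Then `η` is a nonnegative constant multiple of the
restriction of Lebesgue measure to `I`. -/
theorem invariant_measure_is_lebesgue
    (d : ℕ) (I : Set (Fin d → ℝ)) (hI_open : IsOpen I) (hI_bdd : Bornology.IsBounded I)
    (η : Measure (Fin d → ℝ))
    (hη_conc : η Iᶜ = 0)
    (hη_loc : ∀ K : Set (Fin d → ℝ), K ⊆ I → IsCompact K → η K < ⊤)
    (hη_inv : ∀ (T : Equiv.Perm (Fin d → ℝ)), (∃ D : CubeExchangeData d I, D.Realizes ⇑T) →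
      ∀ A : Set (Fin d → ℝ), MeasurableSet A → η (⇑T '' A) = η A) :
    ∃ c : NNReal, η = (c : ENNReal) • volume.restrict I := by
  have hη : η = η.restrict I := by
    rw [Measure.restrict_eq_self_of_ae_mem]
    exact mem_ae_iff.2 hη_conc
  rcases I.eq_empty_or_nonempty with hE | ⟨x0, hx0⟩
  · refine ⟨0, ?_⟩
    rw [hη, hE]; simp
  have hball : ∀ x ∈ I, ∃ R > 0, closedBall x R ⊆ I := fun x hx =>
    Metric.nhds_basis_closedBall.mem_iff.1 (hI_open.mem_nhds hx)
  have hfin : ∀ x R, closedBall x R ⊆ I → IsFiniteMeasure (η.restrict (ball x R)) := by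
    intro x R h
    refine ⟨?_⟩
    rw [Measure.restrict_apply_univ]
    exact (measure_mono ball_subset_closedBall).trans_lt (hη_loc _ h (isCompact_closedBall x R))
  have hres : ∀ x R, ∀ y ∈ ball x R, ∀ᶠ r in nhdsWithin (0 : ℝ) (Set.Ioi 0),
      η.restrict (ball x R) (closedBall y r) = η (closedBall y r) := by
    intro x R y hy
    filter_upwards [cx_eventually_sub d _ isOpen_ball y hy] with r hr
    exact Measure.restrict_eq_self _ hr
  obtain ⟨c, y, hy, hc⟩ : ∃ c : NNReal, ∃ y ∈ I, Filter.Tendsto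
      (fun r => η (closedBall y r) / volume (closedBall y r)) (nhdsWithin (0 : ℝ) (Set.Ioi 0))
      (nhds (c : ENNReal)) := by
    obtain ⟨R, hR, hRI⟩ := hball x0 hx0
    have := hfin x0 R hRI
    have hae := (Besicovitch.ae_tendsto_rnDeriv (η.restrict (ball x0 R)) volume).and
      (Measure.rnDeriv_lt_top (η.restrict (ball x0 R)) volume)
    obtain ⟨y, hyB, hy1, hy2⟩ :=
      ((frequently_ae_mem_iff.2
        (measure_ball_pos volume x0 hR).ne').and_eventually hae).exists
    refine ⟨((η.restrict (ball x0 R)).rnDeriv volume y).toNNReal, y,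
      hRI (ball_subset_closedBall hyB), ?_⟩
    rw [ENNReal.coe_toNNReal hy2.ne]
    refine hy1.congr' ?_
    filter_upwards [hres x0 R y hyB] with r hr
    rw [hr]
  have hall : ∀ x ∈ I, Filter.Tendsto
      (fun r => η (closedBall x r) / volume (closedBall x r)) (nhdsWithin (0 : ℝ) (Set.Ioi 0))
      (nhds (c : ENNReal)) := by
    intro x hx
    refine hc.congr' ?_
    filter_upwards [cx_eventually_eq d I hI_open η hη_inv y x hy hx] with r hr
    rw [hr, Measure.addHaar_closedBall_center volume y, Measure.addHaar_closedBall_center volume x]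
  refine ⟨c, ?_⟩
  have hloc : ∀ x R, closedBall x R ⊆ I →
      η.restrict (ball x R) = ((c : ENNReal) • volume).restrict (ball x R) := by
    intro x R h
    have := hfin x R h
    ext s hs
    have k := cx_local d (ball x R) isOpen_ball (η.restrict (ball x R)) measure_ball_lt_top.ne c
      (by
        intro z hz
        refine (hall z (h (ball_subset_closedBall hz))).congr' ?_
        filter_upwards [hres x R z hz] with r hr
        rw [hr]) (s ∩ ball x R) Set.inter_subset_right
    rw [Measure.restrict_apply hs, Measure.restrict_apply hs]
    rw [Measure.restrict_eq_self _ Set.inter_subset_right] at k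
    rw [k]; rfl
  choose! R hR hRI using hball
  obtain ⟨t, htI, htc, hcov⟩ := TopologicalSpace.countable_cover_nhdsWithin
    (f := fun x => ball x (R x)) (s := I)
    (fun x hx => mem_nhdsWithin_of_mem_nhds (ball_mem_nhds x (hR x hx)))
  have hU : I = ⋃ x ∈ t, ball x (R x) := by
    apply hcov.antisymm
    exact Set.iUnion₂_subset fun x hx => ball_subset_closedBall.trans (hRI x (htI hx))
  rw [hη, ← Measure.restrict_smul, hU]
  exact (Measure.restrict_biUnion_congr htc).2 fun x hx => hloc x (R x) (hRI x (htI hx))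
end

section
/- For real s > −1 and t > 0, let 𝐉_s(t) = Σ_{k=0}^{∞} ((−1)^k / (k! · Γ(k+s+1))) · (t/2)^{2k+s} be the Bessel function of the first kind of order s. Define the diagonal of the Bessel kernel by d_s(x) = (1/2) · ( A′(x)·B(x) − A(x)·B′(x) ) for x > 0, where A(x) = √x · 𝐉_{s+1}(√x) and B(x) = 𝐉_s(√x); equivalently, d_s(x) = lim_{y→x} ( A(x)B(y) − A(y)B(x) ) / (2(x−y)). Then for every s > −1: ∫_0^∞ |d_s(x)| / (1+x) dx < +∞. -/
open MeasureTheory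

/-- `A(x) = √x · 𝐉_{s+1}(√x)`. -/
noncomputable def besselA (s x : ℝ) : ℝ := Real.sqrt x * besselJ (s + 1) (Real.sqrt x)

/-- `B(x) = 𝐉_s(√x)`. -/
noncomputable def besselB (s x : ℝ) : ℝ := besselJ s (Real.sqrt x)

/-- The diagonal of the Bessel kernel: `d_s(x) = (1/2)(A′(x)B(x) − A(x)B′(x))`. -/
noncomputable def besselDiag (s x : ℝ) : ℝ :=
  (1 / 2) * (deriv (besselA s) x * besselB s x - besselA s x * deriv (besselB s) x)

noncomputable def bC (s : ℝ) (k : ℕ) : ℝ :=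
  ((-1 : ℝ) ^ k / ((Nat.factorial k : ℝ) * Real.Gamma ((k : ℝ) + s + 1))) * (1 / 4) ^ k

noncomputable def bG (s x : ℝ) : ℝ := ∑' k : ℕ, bC s k * x ^ k

lemma bC_bound (s : ℝ) (hs : -1 < s) : ∃ C : ℝ, ∀ k, |bC s k| ≤ C * (1 / (Nat.factorial k : ℝ)) := by
  have h1 : ∀ k : ℕ, Real.Gamma (s + 2) ≤ Real.Gamma (((k + 1 : ℕ) : ℝ) + s + 1) := by
    intro k
    induction k with
    | zero => apply le_of_eq; congr 1; push_cast; ring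
    | succ k ih =>
      refine ih.trans ?_
      have e : (((k + 1 + 1 : ℕ) : ℝ) + s + 1) = (((k + 1 : ℕ) : ℝ) + s + 1) + 1 := by
        push_cast; ring
      have hk : (0 : ℝ) ≤ k := Nat.cast_nonneg k
      have hp : (1 : ℝ) ≤ (((k + 1 : ℕ) : ℝ) + s + 1) := by push_cast; linarith
      rw [e, Real.Gamma_add_one (s := (((k + 1 : ℕ) : ℝ) + s + 1)) (by linarith)]
      have := Real.Gamma_pos_of_pos (show 0 < (((k + 1 : ℕ) : ℝ) + s + 1) by linarith)
      nlinarith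
  have g1 : 0 < Real.Gamma (s + 1) := Real.Gamma_pos_of_pos (by linarith)
  have g2 : 0 < Real.Gamma (s + 2) := Real.Gamma_pos_of_pos (by linarith)
  have h2 : ∀ k : ℕ, 1 / Real.Gamma ((k : ℝ) + s + 1)
      ≤ 1 / Real.Gamma (s + 1) + 1 / Real.Gamma (s + 2) := by
    intro k
    rcases k with _ | k
    · have : 0 < 1 / Real.Gamma (s + 2) := by positivity
      simp only [Nat.cast_zero, zero_add]; linarith
    · have : 0 < 1 / Real.Gamma (s + 1) := by positivity
      have := one_div_le_one_div_of_le g2 (h1 k)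
      linarith
  refine ⟨1 / Real.Gamma (s + 1) + 1 / Real.Gamma (s + 2), fun k => ?_⟩
  have hk : (0 : ℝ) ≤ k := Nat.cast_nonneg k
  have gk : 0 < Real.Gamma ((k : ℝ) + s + 1) := Real.Gamma_pos_of_pos (by linarith)
  have hf : (0 : ℝ) < Nat.factorial k := by positivity
  unfold bC
  rw [abs_mul, abs_div, abs_pow, abs_neg, abs_one, one_pow, abs_of_pos (mul_pos hf gk), abs_of_pos (by positivity : (0:ℝ) < (1/4)^k)]
  have e : (1 : ℝ) / ((Nat.factorial k : ℝ) * Real.Gamma ((k : ℝ) + s + 1))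
    = 1 / Real.Gamma ((k : ℝ) + s + 1) * (1 / (Nat.factorial k : ℝ)) := by field_simp
  rw [e]
  have h4 : ((1 : ℝ) / 4) ^ k ≤ 1 := pow_le_one₀ (by norm_num) (by norm_num)
  calc _ ≤ 1 / Real.Gamma ((k : ℝ) + s + 1) * (1 / (Nat.factorial k : ℝ)) * 1 := by gcongr
    _ ≤ _ := by rw [mul_one]; gcongr; exact h2 k

lemma bC_summable (s : ℝ) (hs : -1 < s) (R : ℝ) : Summable fun k => |bC s k| * |R| ^ k := by
  obtain ⟨C, hC⟩ := bC_bound s hs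
  refine Summable.of_nonneg_of_le (fun k => by positivity) (fun k => ?_)
    ((Real.summable_pow_div_factorial |R|).mul_left C)
  calc |bC s k| * |R| ^ k ≤ C * (1 / (Nat.factorial k : ℝ)) * |R| ^ k := by
        gcongr; exact hC k
    _ = _ := by ring

lemma bC_summable' (s : ℝ) (hs : -1 < s) (R : ℝ) : Summable fun k => bC s k * R ^ k := by
  refine Summable.of_abs ?_
  simpa [abs_mul, abs_pow] using bC_summable s hs R

lemma bC_dsum (s : ℝ) (hs : -1 < s) (R : ℝ) (hR : 1 ≤ R) :
    Summable fun k : ℕ => |bC s k| * (k * R ^ (k - 1)) := by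
  refine Summable.of_nonneg_of_le (fun k => by positivity) (fun k => ?_)
    (bC_summable s hs (2 * R))
  rw [abs_of_pos (by positivity : 0 < 2 * R), mul_pow]
  gcongr
  · exact_mod_cast (Nat.lt_two_pow_self).le
  · omega

lemma bG_hasDeriv0 (s : ℝ) (hs : -1 < s) (x : ℝ) :
    HasDerivAt (bG s) (∑' k : ℕ, bC s k * (k * x ^ (k - 1))) x := by
  have hR : 1 ≤ |x| + 1 := by linarith [abs_nonneg x]
  refine hasDerivAt_tsum_of_isPreconnected (t := Metric.ball (0:ℝ) (|x| + 1)) (y₀ := 0)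
    (g := fun k y => bC s k * y ^ k) (g' := fun k y => bC s k * (k * y ^ (k - 1)))
    (bC_dsum s hs _ hR) Metric.isOpen_ball (convex_ball _ _).isPreconnected
    (fun k y _ => (hasDerivAt_pow k y).const_mul _) (fun k y hy => ?_) ?_ ?_ ?_
  · have hy' : |y| ≤ |x| + 1 := by simpa using (mem_ball_zero_iff.1 hy).le
    rw [Real.norm_eq_abs, abs_mul, abs_mul, abs_pow, Nat.abs_cast]
    gcongr
  · simp; linarith
  · exact bC_summable' s hs 0
  · simp

lemma bC_succ (s : ℝ) (k : ℕ) : bC s (k + 1) * ((k : ℝ) + 1) = -(1 / 4) * bC (s + 1) k := by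
  unfold bC
  have e : (((k + 1 : ℕ) : ℝ) + s + 1) = (k : ℝ) + (s + 1) + 1 := by push_cast; ring
  rw [e, Nat.factorial_succ, pow_succ, pow_succ]
  have : (k : ℝ) + 1 ≠ 0 := by positivity
  have : (Nat.factorial k : ℝ) ≠ 0 := by positivity
  push_cast
  by_cases hG : Real.Gamma ((k : ℝ) + (s + 1) + 1) = 0
  · rw [hG]; simp
  · field_simp

lemma bC_shift (s : ℝ) (hs : -1 < s) (k : ℕ) : bC (s + 1) k * ((k : ℝ) + s + 1) = bC s k := by
  unfold bC
  have hk : (0 : ℝ) ≤ k := Nat.cast_nonneg k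
  have h0 : (k : ℝ) + s + 1 ≠ 0 := by linarith
  have e : ((k : ℝ) + (s + 1) + 1) = ((k : ℝ) + s + 1) + 1 := by ring
  rw [e, Real.Gamma_add_one h0]
  have : (Nat.factorial k : ℝ) ≠ 0 := by positivity
  have : Real.Gamma ((k : ℝ) + s + 1) ≠ 0 := (Real.Gamma_pos_of_pos (by linarith)).ne'
  field_simp

lemma bC_dsum' (s : ℝ) (hs : -1 < s) (x : ℝ) :
    Summable fun k : ℕ => bC s k * (k * x ^ (k - 1)) := by
  refine Summable.of_norm_bounded (bC_dsum s hs (|x| + 1) (by linarith [abs_nonneg x])) fun k => ?_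
  rw [Real.norm_eq_abs, abs_mul, abs_mul, abs_pow, Nat.abs_cast]
  gcongr
  linarith

lemma bG_hasDeriv (s : ℝ) (hs : -1 < s) (x : ℝ) :
    HasDerivAt (bG s) (-(1 / 4) * bG (s + 1) x) x := by
  refine (bG_hasDeriv0 s hs x).congr_deriv ?_
  symm
  rw [(bC_dsum' s hs x).tsum_eq_zero_add]
  simp only [Nat.cast_zero, zero_mul, mul_zero, zero_add, bG]
  rw [← tsum_mul_left]
  refine tsum_congr fun k => ?_
  have := bC_succ s k
  push_cast
  try simp only [Nat.add_sub_cancel]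
  linear_combination -(x ^ k) * this

lemma bG_rec (s : ℝ) (hs : -1 < s) (x : ℝ) :
    (s + 1) * bG (s + 1) x + x * (-(1 / 4) * bG (s + 1 + 1) x) = bG s x := by
  have h1 : -1 < s + 1 := by linarith
  rw [(bG_hasDeriv (s + 1) h1 x).unique (bG_hasDeriv0 (s + 1) h1 x)]
  unfold bG
  rw [← tsum_mul_left, ← tsum_mul_left, ← Summable.tsum_add
    ((bC_summable' _ h1 x).mul_left _) ((bC_dsum' _ h1 x).mul_left _)]
  refine tsum_congr fun k => ?_
  rw [← bC_shift s hs k]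
  rcases k with _ | k
  · simp; ring
  · simp only [Nat.add_sub_cancel]; ring

noncomputable def bP (s x : ℝ) : ℝ := (1 / 2) ^ s * x ^ (s / 2)

lemma sqrt_half (s x : ℝ) (hx : 0 < x) : (Real.sqrt x / 2) ^ s = bP s x := by
  unfold bP
  rw [div_eq_mul_one_div, Real.mul_rpow (Real.sqrt_nonneg x) (by norm_num), Real.sqrt_eq_rpow,
    ← Real.rpow_mul hx.le, mul_comm]
  congr 2; ring

lemma besselJ_eq (s x : ℝ) (hx : 0 < x) : besselJ s (Real.sqrt x) = bP s x * bG s x := by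
  unfold besselJ bG
  rw [← tsum_mul_left]
  refine tsum_congr fun k => ?_
  have h : 0 < Real.sqrt x / 2 := by positivity
  have e : (2 * (k : ℝ)) = ((2 * k : ℕ) : ℝ) := by push_cast; ring
  rw [Real.rpow_add h, sqrt_half s x hx, e, Real.rpow_natCast, pow_mul, div_pow,
    Real.sq_sqrt hx.le, div_pow]
  unfold bC
  rw [div_pow, one_pow]
  norm_num
  ring

lemma B_eq (s x : ℝ) (hx : 0 < x) : besselB s x = bP s x * bG s x := besselJ_eq s x hx

lemma A_eq (s x : ℝ) (hx : 0 < x) : besselA s x = bP s x * (x / 2 * bG (s + 1) x) := by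
  unfold besselA
  have h : 0 < Real.sqrt x / 2 := by positivity
  rw [besselJ_eq _ x hx, ← sqrt_half _ x hx, Real.rpow_add h, sqrt_half s x hx, Real.rpow_one]
  have := Real.mul_self_sqrt hx.le
  linear_combination (bP s x * bG (s + 1) x / 2) * this

lemma bP_deriv (s x : ℝ) (hx : 0 < x) : HasDerivAt (bP s) (s / 2 * bP s x / x) x := by
  unfold bP
  refine ((Real.hasDerivAt_rpow_const (p := s / 2) (Or.inl hx.ne')).const_mul ((1 / 2 : ℝ) ^ s)).congr_deriv ?_
  rw [Real.rpow_sub_one hx.ne']; ring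

lemma B_deriv (s : ℝ) (hs : -1 < s) (x : ℝ) (hx : 0 < x) :
    HasDerivAt (besselB s) ((s * besselB s x - besselA s x) / (2 * x)) x := by
  have h := (bP_deriv s x hx).mul (bG_hasDeriv s hs x)
  have h' := h.congr_of_eventuallyEq (f₁ := besselB s)
    (by filter_upwards [lt_mem_nhds hx] with y hy; exact B_eq s y hy)
  refine h'.congr_deriv ?_
  rw [A_eq s x hx, B_eq s x hx]
  field_simp; ring

lemma A_deriv (s : ℝ) (hs : -1 < s) (x : ℝ) (hx : 0 < x) :
    HasDerivAt (besselA s) ((x * besselB s x - s * besselA s x) / (2 * x)) x := by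
  have h := (bP_deriv s x hx).mul
    (((hasDerivAt_id x).div_const 2).mul (bG_hasDeriv (s + 1) (by linarith) x))
  have h' := h.congr_of_eventuallyEq (f₁ := besselA s)
    (by filter_upwards [lt_mem_nhds hx] with y hy; exact A_eq s y hy)
  refine h'.congr_deriv ?_
  rw [A_eq s x hx, B_eq s x hx, ← bG_rec s hs x]
  simp only [id, Pi.mul_apply]
  field_simp; ring

lemma diag_eq (s : ℝ) (hs : -1 < s) (x : ℝ) (hx : 0 < x) :
    besselDiag s x = (x * besselB s x ^ 2 - 2 * s * besselA s x * besselB s x + besselA s x ^ 2)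
      / (4 * x) := by
  unfold besselDiag
  rw [(A_deriv s hs x hx).deriv, (B_deriv s hs x hx).deriv]
  field_simp; ring

lemma diag_cont (s : ℝ) (hs : -1 < s) : ContinuousOn (besselDiag s) (Set.Ioi 0) := by
  have hA : ContinuousOn (besselA s) (Set.Ioi 0) :=
    fun x hx => (A_deriv s hs x hx).continuousAt.continuousWithinAt
  have hB : ContinuousOn (besselB s) (Set.Ioi 0) :=
    fun x hx => (B_deriv s hs x hx).continuousAt.continuousWithinAt
  refine ContinuousOn.congr (f := fun x => (x * besselB s x ^ 2 - 2 * s * besselA s x * besselB s x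
    + besselA s x ^ 2) / (4 * x)) ?_ (fun x hx => diag_eq s hs x hx)
  refine ContinuousOn.div (by fun_prop) (by fun_prop) (fun x hx => ?_)
  have : (0:ℝ) < x := hx
  positivity

lemma near_zero (s : ℝ) (hs : -1 < s) :
    ∃ C : ℝ, ∀ x ∈ Set.Ioc (0:ℝ) 1, |besselDiag s x| ≤ C * x ^ s := by
  have c0 : Continuous (bG s) :=
    continuous_iff_continuousAt.2 fun x => (bG_hasDeriv s hs x).continuousAt
  have c1 : Continuous (bG (s + 1)) :=
    continuous_iff_continuousAt.2 fun x => (bG_hasDeriv (s + 1) (by linarith) x).continuousAt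
  have c2 : Continuous fun x => (1 / 2 : ℝ) ^ s * (1 / 2 : ℝ) ^ s *
    ((bG s x ^ 2 - s * bG (s + 1) x * bG s x + x / 4 * bG (s + 1) x ^ 2) / 4) := by fun_prop
  obtain ⟨C, hC⟩ := (isCompact_Icc (a := (0:ℝ)) (b := 1)).exists_bound_of_continuousOn
    c2.continuousOn
  refine ⟨C, fun x hx => ?_⟩
  have hx0 : 0 < x := hx.1
  have hxs : 0 < x ^ s := Real.rpow_pos_of_pos hx0 s
  have e : besselDiag s x = (1 / 2 : ℝ) ^ s * (1 / 2 : ℝ) ^ s *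
    ((bG s x ^ 2 - s * bG (s + 1) x * bG s x + x / 4 * bG (s + 1) x ^ 2) / 4) * x ^ s := by
    have e1 : x ^ s = x ^ (s / 2) * x ^ (s / 2) := by
      rw [← Real.rpow_add hx0]; congr 1; ring
    rw [diag_eq s hs x hx0, A_eq s x hx0, B_eq s x hx0, e1]
    unfold bP
    field_simp
    ring
  rw [e, abs_mul, abs_of_pos hxs]
  have := hC x ⟨hx0.le, hx.2⟩
  rw [Real.norm_eq_abs] at this
  gcongr

/-- energy in the variable `t = √x` -/
noncomputable def bF (s t : ℝ) : ℝ :=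
  t * besselB s (t ^ 2) ^ 2 + ((s + 1 / 2) * besselB s (t ^ 2) - besselA s (t ^ 2)) ^ 2 / t

lemma F_deriv (s : ℝ) (hs : -1 < s) (t : ℝ) (ht : 0 < t) :
    HasDerivAt (bF s) (2 * (s ^ 2 - 1 / 4) / t ^ 2 *
      (besselB s (t ^ 2) * ((s + 1 / 2) * besselB s (t ^ 2) - besselA s (t ^ 2)))) t := by
  have hsq : HasDerivAt (fun t : ℝ => t ^ 2) (2 * t) t := by simpa using hasDerivAt_pow 2 t
  have hB := (B_deriv s hs (t ^ 2) (by positivity)).comp t hsq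
  have hA := (A_deriv s hs (t ^ 2) (by positivity)).comp t hsq
  have h := ((hasDerivAt_id t).mul (hB.pow 2)).add
    ((((hB.const_mul (s + 1 / 2)).sub hA).pow 2).div (hasDerivAt_id t) ht.ne')
  refine h.congr_deriv ?_
  simp only [Function.comp, id, Pi.pow_apply, Pi.sub_apply]
  field_simp
  ring

lemma F_bound (s : ℝ) (hs : -1 < s) : ∃ K : ℝ, 0 ≤ K ∧ ∀ t, 1 ≤ t → bF s t ≤ K := by
  set c : ℝ := |s ^ 2 - 1 / 4| with hc
  have hd : ∀ t : ℝ, 0 < t → HasDerivAt (fun t => bF s t * Real.exp (c / t))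
      (2 * (s ^ 2 - 1 / 4) / t ^ 2 *
      (besselB s (t ^ 2) * ((s + 1 / 2) * besselB s (t ^ 2) - besselA s (t ^ 2))) * Real.exp (c / t)
        + bF s t * (Real.exp (c / t) * (-c / t ^ 2))) t := by
    intro t ht
    have h1 : HasDerivAt (fun t : ℝ => c / t) (-c / t ^ 2) t := by
      refine ((hasDerivAt_inv ht.ne').const_mul c).congr_deriv ?_
      ring
    exact (F_deriv s hs t ht).mul h1.exp
  have hF0 : ∀ t, 0 < t → 0 ≤ bF s t := by
    intro t ht; unfold bF; positivity
  have hanti : AntitoneOn (fun t => bF s t * Real.exp (c / t)) (Set.Ici 1) := by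
    have hp : ∀ t ∈ Set.Ici (1:ℝ), 0 < t := fun t ht => lt_of_lt_of_le one_pos ht
    refine antitoneOn_of_deriv_nonpos (convex_Ici 1)
      (fun t ht => (hd t (hp t ht)).continuousAt.continuousWithinAt)
      (fun t ht => (hd t (hp t (interior_subset ht))).differentiableAt.differentiableWithinAt)
      (fun t ht => ?_)
    have ht0 := hp t (interior_subset ht)
    rw [(hd t ht0).deriv]
    unfold bF
    set b := besselB s (t ^ 2)
    set a := (s + 1 / 2) * b - besselA s (t ^ 2)
    have key : 2 * (s ^ 2 - 1 / 4) * (b * a) ≤ c * (t * b ^ 2 + a ^ 2 / t) := by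
      have h1 : 2 * (s ^ 2 - 1 / 4) * (b * a) ≤ c * (2 * |b * a|) := by
        have := le_abs_self ((s ^ 2 - 1 / 4) * (b * a))
        rw [abs_mul, ← hc] at this
        linarith
      have h2 : 2 * |b * a| ≤ t * b ^ 2 + a ^ 2 / t := by
        have h3 : t * b ^ 2 + a ^ 2 / t - 2 * |b * a| = (t * |b| - |a|) ^ 2 / t := by
          rw [abs_mul, ← sq_abs b, ← sq_abs a]; field_simp; ring
        have : 0 ≤ (t * |b| - |a|) ^ 2 / t := by positivity
        linarith
      exact h1.trans (mul_le_mul_of_nonneg_left h2 (abs_nonneg _))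
    have e : 2 * (s ^ 2 - 1 / 4) / t ^ 2 * (b * a) * Real.exp (c / t)
        + (t * b ^ 2 + a ^ 2 / t) * (Real.exp (c / t) * (-c / t ^ 2))
        = Real.exp (c / t) / t ^ 2 *
          (2 * (s ^ 2 - 1 / 4) * (b * a) - c * (t * b ^ 2 + a ^ 2 / t)) := by
      ring
    rw [e]
    exact mul_nonpos_of_nonneg_of_nonpos (by positivity) (by linarith)
  refine ⟨bF s 1 * Real.exp (c / 1), mul_nonneg (hF0 1 one_pos) (Real.exp_pos _).le, fun t ht => ?_⟩
  have h := hanti (Set.mem_Ici.2 le_rfl) (Set.mem_Ici.2 ht) ht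
  have h0 : 0 < t := by linarith
  have h1 : 1 ≤ Real.exp (c / t) := Real.one_le_exp (by positivity)
  have := hF0 t h0
  simp only at h
  nlinarith

lemma near_inf (s : ℝ) (hs : -1 < s) :
    ∃ C : ℝ, ∀ x ∈ Set.Ioi (1:ℝ), |besselDiag s x| ≤ C * x ^ (-(1 / 2) : ℝ) := by
  obtain ⟨K, hK, hF⟩ := F_bound s hs
  refine ⟨K * (1 + |s| + 2 * (1 + |s|) * (1 + (s + 1 / 2) ^ 2)), fun x hx => ?_⟩
  have hx1 : 1 < x := hx
  have hx0 : 0 < x := by linarith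
  rw [diag_eq s hs x hx0, Real.rpow_neg hx0.le, ← Real.sqrt_eq_rpow]
  obtain ⟨t, ht⟩ : ∃ t, t = Real.sqrt x := ⟨_, rfl⟩
  have ht1 : 1 ≤ t := by rw [ht]; exact Real.one_le_sqrt.2 hx1.le
  have hxt : x = t ^ 2 := by rw [ht, Real.sq_sqrt hx0.le]
  have h := hF t ht1
  rw [← ht]
  unfold bF at h
  rw [← hxt] at h
  set b := besselB s x
  set a := besselA s x
  have ht0 : 0 < t := by linarith
  have hb : t * b ^ 2 ≤ K := by
    have : 0 ≤ ((s + 1 / 2) * b - a) ^ 2 / t := by positivity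
    linarith
  have hv : ((s + 1 / 2) * b - a) ^ 2 ≤ K * t := by
    have h0 : 0 ≤ t * b ^ 2 := by positivity
    rw [← div_le_iff₀ ht0]
    linarith
  have hb2 : b ^ 2 ≤ K * t := by nlinarith [sq_nonneg b]
  have ha : a ^ 2 ≤ 2 * (1 + (s + 1 / 2) ^ 2) * (K * t) := by
    have h1 : a ^ 2 ≤ 2 * ((s + 1 / 2) * b - a) ^ 2 + 2 * ((s + 1 / 2) ^ 2 * b ^ 2) := by
      nlinarith [sq_nonneg (((s + 1 / 2) * b - a) + (s + 1 / 2) * b), sq_nonneg (2 * (s + 1 / 2) * b - a)]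
    have := mul_le_mul_of_nonneg_left hb2 (sq_nonneg (s + 1 / 2))
    nlinarith
  have hxb : x * b ^ 2 ≤ K * t := by
    rw [hxt]; nlinarith
  have hab : |2 * s * a * b| ≤ |s| * (a ^ 2 + b ^ 2) := by
    rw [show 2 * s * a * b = s * (2 * (a * b)) by ring, abs_mul]
    refine mul_le_mul_of_nonneg_left ?_ (abs_nonneg s)
    rw [abs_le]; constructor <;> nlinarith [sq_nonneg (a + b), sq_nonneg (a - b)]
  have hnum : |x * b ^ 2 - 2 * s * a * b + a ^ 2| ≤
      (K * (1 + |s| + 2 * (1 + |s|) * (1 + (s + 1 / 2) ^ 2))) * t := by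
    have hs0 := abs_nonneg s
    have h1 := mul_le_mul_of_nonneg_left ha hs0
    have h2 := mul_le_mul_of_nonneg_left hb2 hs0
    have h3 : 0 ≤ x * b ^ 2 := by positivity
    have h4 := sq_nonneg a
    have := abs_le.1 hab
    rw [abs_le]; constructor <;> linarith
  rw [abs_div, abs_of_pos (by positivity : 0 < 4 * x), div_le_iff₀ (by positivity)]
  refine hnum.trans ?_
  set M := K * (1 + |s| + 2 * (1 + |s|) * (1 + (s + 1 / 2) ^ 2))
  have hM : 0 ≤ M := by positivity
  have e : M * t⁻¹ * (4 * x) = 4 * (M * t) := by rw [hxt]; field_simp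
  rw [e]
  have : 0 ≤ M * t := by positivity
  linarith

/-- For every `s > −1` the diagonal of the Bessel kernel satisfies
`∫_0^∞ |d_s(x)| / (1+x) dx < ∞`. -/
theorem besselDiag_integrable (s : ℝ) (hs : -1 < s) :
    IntegrableOn (fun x : ℝ => |besselDiag s x| / (1 + x)) (Set.Ioi (0 : ℝ)) := by
  have hcont : ContinuousOn (fun x : ℝ => |besselDiag s x| / (1 + x)) (Set.Ioi (0 : ℝ)) := by
    refine ContinuousOn.div (diag_cont s hs).abs (by fun_prop) (fun x hx => ?_)
    have : (0:ℝ) < x := hx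
    positivity
  rw [← Set.Ioc_union_Ioi_eq_Ioi (zero_le_one (α := ℝ))]
  refine IntegrableOn.union ?_ ?_
  · obtain ⟨C, hC⟩ := near_zero s hs
    have hi : IntegrableOn (fun x : ℝ => C * x ^ s) (Set.Ioc 0 1) :=
      ((intervalIntegrable_iff_integrableOn_Ioc_of_le zero_le_one).1
        (intervalIntegral.intervalIntegrable_rpow' hs)).const_mul C
    refine Integrable.mono' hi ((hcont.mono fun x hx => hx.1).aestronglyMeasurable
      measurableSet_Ioc) ((ae_restrict_iff' measurableSet_Ioc).2 (ae_of_all _ fun x hx => ?_))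
    have h0 : 0 < x := hx.1
    rw [Real.norm_eq_abs, abs_of_nonneg (by positivity)]
    exact (div_le_self (abs_nonneg _) (by linarith)).trans (hC x hx)
  · obtain ⟨C, hC⟩ := near_inf s hs
    have hi : IntegrableOn (fun x : ℝ => C * x ^ (-(3 / 2) : ℝ)) (Set.Ioi 1) :=
      (integrableOn_Ioi_rpow_of_lt (by norm_num) one_pos).const_mul C
    have hsub : Set.Ioi (1:ℝ) ⊆ Set.Ioi 0 := Set.Ioi_subset_Ioi zero_le_one
    refine Integrable.mono' hi ((hcont.mono hsub).aestronglyMeasurable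
      measurableSet_Ioi) ((ae_restrict_iff' measurableSet_Ioi).2 (ae_of_all _ fun x hx => ?_))
    have h0 : 0 < x := hsub hx
    rw [Real.norm_eq_abs, abs_of_nonneg (by positivity)]
    have e : C * x ^ (-(3 / 2) : ℝ) = C * x ^ (-(1 / 2) : ℝ) / x := by
      rw [show (-(3 / 2) : ℝ) = -(1 / 2) - 1 by norm_num, Real.rpow_sub_one h0.ne']; ring
    rw [e]
    calc |besselDiag s x| / (1 + x) ≤ |besselDiag s x| / x := by gcongr; linarith
      _ ≤ _ := by gcongr; exact hC x hx
end
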